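/- arXiv:2303.03325 — 5 statements merged into one kernel-verified Lean document; each statement's English description precedes it below -/
import Mathlib

section
/- Let f₁,…,f_{d+1} be Nash functions on an open set U ⊆ ℝ^d, and let U' := {x ∈ U : det ∂(f₂,…,f_{d+1})/∂x (x) ≠ 0}. Then the function φ(x) := det ∂(f₁,…,f_d)/∂x (x) · (det ∂(f₂,…,f_{d+1})/∂x (x))^{-1} is a Nash function on U', and its complexity satisfies c(φ) ≤ (c(f₁) ⋯ c(f_{d+1}))². -/
noncomputable section

open scoped BigOperators

namespace StatementThirteen

/-- `Φ` is an algebraic lifting map on `U` with annihilating polynomial map `p`. -/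
def IsAlgLift (d M : ℕ) (U : Set (Fin d → ℝ)) (Φ : (Fin d → ℝ) → Fin M → ℝ)
    (p : Fin M → MvPolynomial (Fin d ⊕ Fin M) ℝ) : Prop :=
  AnalyticOnNhd ℝ Φ U ∧
  (∀ x ∈ U, ∀ j, MvPolynomial.eval (Sum.elim x (Φ x)) (p j) = 0) ∧
  (∀ V : Set (Fin d → ℝ), IsOpen V → V ⊆ U → V.Nonempty →
    ∃ x ∈ V, Matrix.det (Matrix.of fun j j' : Fin M =>
      MvPolynomial.eval (Sum.elim x (Φ x)) (MvPolynomial.pderiv (Sum.inr j') (p j))) ≠ 0)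

/-- `f` lifts to the polynomial `F` via the algebraic lifting map `Φ` with
annihilating map `p`. -/
def IsNashRep (d M : ℕ) (U : Set (Fin d → ℝ)) (f : (Fin d → ℝ) → ℝ)
    (Φ : (Fin d → ℝ) → Fin M → ℝ)
    (p : Fin M → MvPolynomial (Fin d ⊕ Fin M) ℝ)
    (F : MvPolynomial (Fin d ⊕ Fin M) ℝ) : Prop :=
  IsAlgLift d M U Φ p ∧ ∀ x ∈ U, f x = MvPolynomial.eval (Sum.elim x (Φ x)) F

/-- `f` is a Nash function on `U`. -/
def IsNash (d : ℕ) (U : Set (Fin d → ℝ)) (f : (Fin d → ℝ) → ℝ) : Prop :=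
  ∃ (M : ℕ) (Φ : (Fin d → ℝ) → Fin M → ℝ)
    (p : Fin M → MvPolynomial (Fin d ⊕ Fin M) ℝ)
    (F : MvPolynomial (Fin d ⊕ Fin M) ℝ), IsNashRep d M U f Φ p F

open Classical in
/-- The complexity of a Nash function: the minimum of `deg F · deg p¹ ⋯ deg p^M`
over all representations; the zero function has complexity `0`. -/
def complexity (d : ℕ) (U : Set (Fin d → ℝ)) (f : (Fin d → ℝ) → ℝ) : ℕ :=
  if ∀ x ∈ U, f x = 0 then 0
  else sInf { c : ℕ | ∃ (M : ℕ) (Φ : (Fin d → ℝ) → Fin M → ℝ)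
    (p : Fin M → MvPolynomial (Fin d ⊕ Fin M) ℝ)
    (F : MvPolynomial (Fin d ⊕ Fin M) ℝ), IsNashRep d M U f Φ p F ∧
    c = F.totalDegree * ∏ j, (p j).totalDegree }

/-- The Jacobian determinant of a `d`-tuple of functions. -/
def jacDet (d : ℕ) (g : Fin d → (Fin d → ℝ) → ℝ) (x : Fin d → ℝ) : ℝ :=
  Matrix.det (Matrix.of fun i j : Fin d => fderiv ℝ (g i) x (Pi.single j 1))

/-!
Suppose that `f₁, …, f_{d+1}` are given by polynomials `Fᵢ` along one lifting map `Φ` with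
annihilating map `P`. Differentiating `f = F(x, Φ)` and `P(x, Φ) = 0` and eliminating `DΦ` by block
elimination gives, with `F` standing for `d` of the `Fᵢ`,

  `det ∂f/∂x · det D_y P = det ∂(F, P)/∂(x, y)`.

The right-hand side is a polynomial in `(x, Φ)`, so that `det D_y P` cancels in `φ` and `φ` is a
quotient `A / B` of two such polynomials. Appending `φ` to `Φ` and `B z - A` to `P` is then a
lifting map on `U'`, on which `φ` is a coordinate. A determinant of partial derivatives has degree
at most the sum of the `deg - 1`, hence `deg (B z - A) ≤ 1 + ∑ (deg - 1) ≤ ∏ deg`; this factor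
besides the `deg Pᵏ` accounts for the square.

The inequality `1 + ∑ (deg - 1) ≤ ∏ deg` requires positive degrees. They are automatic unless `φ`
vanishes identically: a constant `fᵢ` makes one of the two Jacobian determinants zero.
-/

open MvPolynomial Topology

section Algebra

variable {R σ τ m n o : Type*}

lemma pderiv_rename_of_notMem_range [CommSemiring R] {f : σ → τ} {c : τ} (hc : c ∉ Set.range f)
    (p : MvPolynomial σ R) : pderiv c (rename f p) = 0 := by
  classical
  refine pderiv_eq_zero_of_notMem_vars fun h => hc ?_
  obtain ⟨a, -, ha⟩ := Finset.mem_image.1 (vars_rename f p h)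
  exact ⟨a, ha⟩

lemma totalDegree_pderiv_le [CommSemiring R] (i : σ) (p : MvPolynomial σ R) :
    (pderiv i p).totalDegree ≤ p.totalDegree - 1 := by
  refine Finset.sup_le fun s hs => ?_
  rw [mem_support_iff, coeff_pderiv] at hs
  have hle := le_totalDegree (mem_support_iff.2 (left_ne_zero_of_mul hs))
  rw [Finsupp.sum_add_index' (fun _ => rfl) (fun _ _ _ => rfl),
    Finsupp.sum_single_index rfl] at hle
  exact Nat.le_sub_one_of_lt hle

lemma totalDegree_det_le [CommRing R] [Fintype n] [DecidableEq n]
    (A : Matrix n n (MvPolynomial σ R)) (b : n → ℕ) (h : ∀ i j, (A i j).totalDegree ≤ b i) :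
    A.det.totalDegree ≤ ∑ i, b i := by
  rw [Matrix.det_apply]
  refine totalDegree_finsetSum_le fun e _ => (totalDegree_smul_le _ _).trans ?_
  calc (∏ i, A (e i) i).totalDegree
      ≤ ∑ i, (A (e i) i).totalDegree := totalDegree_finsetProd _ _
    _ ≤ ∑ i, b (e i) := Finset.sum_le_sum fun i _ => h (e i) i
    _ = ∑ i, b i := Equiv.sum_comp e b

lemma one_add_sum_sub_one_le_prod (s : Finset n) {b : n → ℕ} (hb : ∀ i ∈ s, 0 < b i) :
    1 + ∑ i ∈ s, (b i - 1) ≤ ∏ i ∈ s, b i := by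
  induction s using Finset.cons_induction with
  | empty => simp
  | cons a s ha ih =>
    rw [Finset.forall_mem_cons] at hb
    rw [Finset.sum_cons, Finset.prod_cons]
    have ih := ih hb.2
    obtain ⟨k, hk⟩ := Nat.exists_eq_succ_of_ne_zero hb.1.ne'
    rw [hk, Nat.succ_sub_one]
    nlinarith [Nat.zero_le (k * ∑ i ∈ s, (b i - 1))]

lemma det_blockDiagonal' [CommRing R] [Fintype o] [DecidableEq o] {n : o → Type*}
    [∀ i, Fintype (n i)] [∀ i, DecidableEq (n i)] (M : ∀ i, Matrix (n i) (n i) R) :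
    (Matrix.blockDiagonal' M).det = ∏ i, (M i).det := by
  let : LinearOrder o := LinearOrder.lift' _ (Fintype.equivFin o).injective
  rw [(Matrix.blockTriangular_blockDiagonal' M).det_fintype]
  refine Finset.prod_congr rfl fun i _ => ?_
  rw [← Matrix.det_submatrix_equiv_self (Equiv.sigmaSubtype i).symm]
  congr 1
  ext a b
  exact Matrix.blockDiagonal'_apply_eq M i a b

lemma det_fromBlocks_of_add_mul_eq_zero [CommRing R] [Fintype m] [DecidableEq m] [Fintype n]
    [DecidableEq n] (A : Matrix m m R) (B : Matrix m n R) {C : Matrix n m R} {D : Matrix n n R}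
    {N : Matrix n m R} (h : C + D * N = 0) :
    (Matrix.fromBlocks A B C D).det = (A + B * N).det * D.det := by
  have hmul : Matrix.fromBlocks A B C D * Matrix.fromBlocks 1 0 N 1 =
      Matrix.fromBlocks (A + B * N) B 0 D := by
    simp [Matrix.fromBlocks_multiply, h]
  simpa using congrArg Matrix.det hmul

lemma eval_sumElim_rename_map_id [CommSemiring R] (x : σ → R) (y : n → R) (r : m → n)
    (p : MvPolynomial (σ ⊕ m) R) :
    eval (Sum.elim x y) (rename (Sum.map id r) p) = eval (Sum.elim x (y ∘ r)) p := by
  rw [eval_rename, Sum.elim_comp_map, Function.comp_id]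

end Algebra

section PolynomialJacobian

variable {R κ σ ι ι' m o : Type*} [CommRing R]

/-- The Jacobian matrix of a polynomial map, with polynomial entries. -/
def polyJacobian (P : m → MvPolynomial σ R) : Matrix m σ (MvPolynomial σ R) :=
  Matrix.of fun i s => pderiv s (P i)

/-- The determinant `det D_y p` of a square polynomial system `p(x, y)`, where the variables `y`
are those indexed by the right summand of `κ ⊕ ι`. -/
def fiberDet [Fintype ι] [DecidableEq ι] (p : ι → MvPolynomial (κ ⊕ ι) R) :
    MvPolynomial (κ ⊕ ι) R :=
  (polyJacobian p).toCols₂.det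

lemma totalDegree_det_polyJacobian_le [Fintype σ] [DecidableEq σ] (P : σ → MvPolynomial σ R) :
    (polyJacobian P).det.totalDegree ≤ ∑ i, ((P i).totalDegree - 1) :=
  totalDegree_det_le _ _ fun i j => totalDegree_pderiv_le j (P i)

lemma pderiv_inr_rename_map_id {r : ι → ι'} (hr : Function.Injective r) (i : ι)
    (p : MvPolynomial (κ ⊕ ι) R) :
    pderiv (Sum.inr (r i)) (rename (Sum.map id r) p) =
      rename (Sum.map id r) (pderiv (Sum.inr i) p) :=
  pderiv_rename (Function.injective_id.sumMap hr) (x := Sum.inr i) p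

lemma pderiv_inr_rename_map_id_of_notMem_range {r : ι → ι'} {c : ι'} (hc : c ∉ Set.range r)
    (p : MvPolynomial (κ ⊕ ι) R) : pderiv (Sum.inr c) (rename (Sum.map id r) p) = 0 := by
  refine pderiv_rename_of_notMem_range ?_ p
  rintro ⟨a | i, h⟩
  · simp at h
  · exact hc ⟨i, Sum.inr_injective h⟩

/-- The polynomial `B z - A` in the variables of `A` and `B` and one new variable `z`; it
annihilates the quotient `A / B`. -/
def quotientEquation (A B : MvPolynomial (κ ⊕ ι) R) : MvPolynomial (κ ⊕ (ι ⊕ Unit)) R :=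
  rename (Sum.map id Sum.inl) B * X (Sum.inr (Sum.inr ())) - rename (Sum.map id Sum.inl) A

lemma totalDegree_quotientEquation_le (A B : MvPolynomial (κ ⊕ ι) R) :
    (quotientEquation A B).totalDegree ≤ max (B.totalDegree + 1) A.totalDegree := by
  cases subsingleton_or_nontrivial R
  · simp [Subsingleton.elim (quotientEquation A B) 0]
  refine (totalDegree_sub _ _).trans (max_le_max ?_ (totalDegree_rename_le _ A))
  refine (totalDegree_mul _ _).trans ?_
  rw [totalDegree_X]
  exact Nat.add_le_add_right (totalDegree_rename_le _ B) 1

lemma pderiv_quotientEquation (A B : MvPolynomial (κ ⊕ ι) R) :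
    pderiv (Sum.inr (Sum.inr ())) (quotientEquation A B) = rename (Sum.map id Sum.inl) B := by
  have hz : Sum.inr () ∉ Set.range (Sum.inl : ι → ι ⊕ Unit) := by simp
  simp [quotientEquation, pderiv_inr_rename_map_id_of_notMem_range hz]

/-- The system `p` with the equation `B z - A = 0` for the quotient `A / B` adjoined. -/
def adjoinQuotient (p : ι → MvPolynomial (κ ⊕ ι) R) (A B : MvPolynomial (κ ⊕ ι) R) :
    ι ⊕ Unit → MvPolynomial (κ ⊕ (ι ⊕ Unit)) R :=
  Sum.elim (fun k => rename (Sum.map id Sum.inl) (p k)) fun _ => quotientEquation A B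

variable [Fintype ι]

lemma prod_totalDegree_adjoinQuotient_le (p : ι → MvPolynomial (κ ⊕ ι) R)
    (A B : MvPolynomial (κ ⊕ ι) R) :
    ∏ j, (adjoinQuotient p A B j).totalDegree ≤
      (∏ k, (p k).totalDegree) * (quotientEquation A B).totalDegree := by
  simp only [Fintype.prod_sum_type, Finset.univ_unique, Finset.prod_singleton]
  exact Nat.mul_le_mul_right _ (Finset.prod_le_prod' fun k _ => totalDegree_rename_le _ (p k))

variable [DecidableEq ι]

lemma fiberDet_rename_equiv [Fintype ι'] [DecidableEq ι'] (e : ι ≃ ι')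
    (p : ι → MvPolynomial (κ ⊕ ι) R) :
    fiberDet (fun k => rename (Sum.map id e) (p (e.symm k))) =
      rename (Sum.map id e) (fiberDet p) := by
  rw [fiberDet, fiberDet, AlgHom.map_det, ← Matrix.det_submatrix_equiv_self e]
  congr 1
  ext1 j k
  simpa [polyJacobian] using pderiv_inr_rename_map_id e.injective k (p j)

/-- The disjoint union of the polynomial systems `p i`, which share the variables indexed by `κ`
but no others. -/
def sigmaSystem {ι : o → Type*} (p : ∀ i, ι i → MvPolynomial (κ ⊕ ι i) R) :
    (Σ i, ι i) → MvPolynomial (κ ⊕ Σ i, ι i) R :=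
  fun k => rename (Sum.map id (Sigma.mk k.1)) (p k.1 k.2)

lemma fiberDet_sigmaSystem [Fintype o] [DecidableEq o] {ι : o → Type*} [∀ i, Fintype (ι i)]
    [∀ i, DecidableEq (ι i)] (p : ∀ i, ι i → MvPolynomial (κ ⊕ ι i) R) :
    fiberDet (sigmaSystem p) = ∏ i, rename (Sum.map id (Sigma.mk i)) (fiberDet (p i)) := by
  simp_rw [fiberDet, AlgHom.map_det]
  rw [← det_blockDiagonal']
  congr 1
  ext1 ⟨i, j⟩ ⟨i', j'⟩
  obtain rfl | hne := eq_or_ne i i'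
  · rw [Matrix.blockDiagonal'_apply_eq]
    exact pderiv_inr_rename_map_id sigma_mk_injective j' (p i j)
  · rw [Matrix.blockDiagonal'_apply_ne _ _ _ hne]
    exact pderiv_inr_rename_map_id_of_notMem_range (by simpa using hne.symm) (p i j)

lemma totalDegree_quotientEquation_det_polyJacobian_le {d : ℕ}
    {G : Fin (d + 1) → MvPolynomial (Fin d ⊕ ι) R} {p : ι → MvPolynomial (Fin d ⊕ ι) R}
    (hG : ∀ i, 0 < (G i).totalDegree) (hp : ∀ k, 0 < (p k).totalDegree) :
    (quotientEquation (polyJacobian (Sum.elim (fun i => G i.castSucc) p)).det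
        (polyJacobian (Sum.elim (fun i => G i.succ) p)).det).totalDegree ≤
      (∏ i, (G i).totalDegree) * ∏ k, (p k).totalDegree := by
  have hdet (H : Fin d → MvPolynomial (Fin d ⊕ ι) R) :
      (polyJacobian (Sum.elim H p)).det.totalDegree ≤
        ∑ i, ((H i).totalDegree - 1) + ∑ k, ((p k).totalDegree - 1) :=
    (totalDegree_det_polyJacobian_le _).trans_eq (Fintype.sum_sum_type _)
  have hA := hdet fun i => G i.castSucc
  have hB := hdet fun i => G i.succ
  have hsum₁ := Fin.sum_univ_castSucc fun i => (G i).totalDegree - 1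
  have hsum₂ := Fin.sum_univ_succ fun i => (G i).totalDegree - 1
  have hprod := one_add_sum_sub_one_le_prod Finset.univ
    (b := Sum.elim (fun i => (G i).totalDegree) fun k => (p k).totalDegree)
    (by simpa using ⟨hG, hp⟩)
  simp only [Fintype.sum_sum_type, Fintype.prod_sum_type, Sum.elim_inl, Sum.elim_inr] at hprod
  refine (totalDegree_quotientEquation_le _ _).trans (max_le ?_ ?_) <;> omega

lemma fiberDet_adjoinQuotient (p : ι → MvPolynomial (κ ⊕ ι) R) (A B : MvPolynomial (κ ⊕ ι) R) :
    fiberDet (adjoinQuotient p A B) =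
      rename (Sum.map id Sum.inl) (fiberDet p) * rename (Sum.map id Sum.inl) B := by
  set J := (polyJacobian (adjoinQuotient p A B)).toCols₂ with hJ
  have h₁₁ : J.toBlocks₁₁ = (rename (Sum.map id Sum.inl)).mapMatrix (polyJacobian p).toCols₂ := by
    ext1 j k
    exact pderiv_inr_rename_map_id Sum.inl_injective k (p j)
  have h₁₂ : J.toBlocks₁₂ = 0 := by
    ext1 j k
    exact pderiv_inr_rename_map_id_of_notMem_range (by simp) (p j)
  have h₂₂ : J.toBlocks₂₂.det = rename (Sum.map id Sum.inl) B := by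
    rw [Matrix.det_unique]
    exact pderiv_quotientEquation A B
  rw [fiberDet, fiberDet, ← hJ, ← J.fromBlocks_toBlocks, h₁₂, Matrix.det_fromBlocks_zero₁₂,
    h₁₁, h₂₂, AlgHom.map_det]

end PolynomialJacobian

section ChainRule

variable {𝕜 : Type*} [NontriviallyNormedField 𝕜]

lemma hasFDerivAt_eval {E σ : Type*} [NormedAddCommGroup E] [NormedSpace 𝕜 E] [Fintype σ]
    {s : E → σ → 𝕜} {s' : σ → E →L[𝕜] 𝕜} {x : E}
    (hs : ∀ i, HasFDerivAt (fun y => s y i) (s' i) x) (Q : MvPolynomial σ 𝕜) :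
    HasFDerivAt (fun y => eval (s y) Q) (∑ i, eval (s x) (pderiv i Q) • s' i) x := by
  classical
  induction Q using MvPolynomial.induction_on with
  | C a =>
    simp only [eval_C]
    refine (hasFDerivAt_const a x).congr_fderiv ?_
    ext v
    simp
  | add p q hp hq =>
    simp only [map_add]
    refine (hp.fun_add hq).congr_fderiv ?_
    ext v
    simp [add_mul, Finset.sum_add_distrib]
  | mul_X p i hp =>
    simp only [map_mul, eval_X]
    refine (hp.fun_mul (hs i)).congr_fderiv ?_
    ext v
    simp [add_mul, mul_assoc, Finset.sum_add_distrib, pderiv_X, Pi.single_apply, Finset.mul_sum,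
      apply_ite]

variable {κ ι m : Type*} [DecidableEq κ]

/-- The Jacobian matrix `∂g/∂x` of the partial derivatives of a family of functions at `x`. -/
def jacobianMatrix (g : m → (κ → 𝕜) → 𝕜) (x : κ → 𝕜) : Matrix m κ 𝕜 :=
  Matrix.of fun i j => fderiv 𝕜 (g i) x (Pi.single j 1)

lemma jacobianMatrix_apply_eq_zero_of_eventually_const {g : m → (κ → 𝕜) → 𝕜} {x : κ → 𝕜} {i : m}
    {c : 𝕜} (hc : ∀ᶠ y in 𝓝 x, g i y = c) (j : κ) : jacobianMatrix g x i j = 0 := by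
  have hfderiv : fderiv 𝕜 (g i) x = 0 := by
    rw [Filter.EventuallyEq.fderiv_eq hc, fderiv_fun_const, Pi.zero_apply]
  simp [jacobianMatrix, hfderiv]

lemma totalDegree_pos_of_det_jacobianMatrix_ne_zero [Fintype κ] {Φ : (κ → 𝕜) → ι → 𝕜}
    {g : κ → (κ → 𝕜) → 𝕜} {x : κ → 𝕜} (hdet : (jacobianMatrix g x).det ≠ 0) {i : κ}
    {G : MvPolynomial (κ ⊕ ι) 𝕜} (hg : ∀ᶠ y in 𝓝 x, g i y = eval (Sum.elim y (Φ y)) G) :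
    0 < G.totalDegree := by
  rw [Nat.pos_iff_ne_zero]
  intro h0
  rw [totalDegree_eq_zero_iff_eq_C] at h0
  rw [h0] at hg
  simp only [eval_C] at hg
  exact hdet <| Matrix.det_eq_zero_of_row_eq_zero i <|
    jacobianMatrix_apply_eq_zero_of_eventually_const hg

variable [Fintype ι] {Φ : (κ → 𝕜) → ι → 𝕜} {x : κ → 𝕜}

lemma jacobianMatrix_eq_of_eventually_eq_eval [Finite κ] (hΦ : DifferentiableAt 𝕜 Φ x)
    {g : m → (κ → 𝕜) → 𝕜} {G : m → MvPolynomial (κ ⊕ ι) 𝕜}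
    (hg : ∀ i, ∀ᶠ y in 𝓝 x, g i y = eval (Sum.elim y (Φ y)) (G i)) :
    jacobianMatrix g x =
      (polyJacobian G).toCols₁.map (eval (Sum.elim x (Φ x))) +
        (polyJacobian G).toCols₂.map (eval (Sum.elim x (Φ x))) *
          jacobianMatrix (fun k y => Φ y k) x := by
  cases nonempty_fintype κ
  have hgraph : ∀ c, HasFDerivAt (fun y => Sum.elim y (Φ y) c)
      (Sum.elim (ContinuousLinearMap.proj (R := 𝕜) (φ := fun _ : κ => 𝕜))
        (fun k => fderiv 𝕜 (fun y => Φ y k) x) c) x := by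
    rintro (j | k)
    · exact hasFDerivAt_apply j x
    · exact (differentiableAt_pi.1 hΦ k).hasFDerivAt
  ext i j
  have hi := (hasFDerivAt_eval hgraph (G i)).congr_of_eventuallyEq (hg i)
  simp [jacobianMatrix, hi.fderiv, polyJacobian, Matrix.mul_apply, Matrix.toCols₁,
    Matrix.toCols₂, Pi.single_apply]

lemma eval_det_polyJacobian_sumElim [Fintype κ] [DecidableEq ι] (hΦ : DifferentiableAt 𝕜 Φ x)
    {g : κ → (κ → 𝕜) → 𝕜} {G : κ → MvPolynomial (κ ⊕ ι) 𝕜} {P : ι → MvPolynomial (κ ⊕ ι) 𝕜}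
    (hg : ∀ i, ∀ᶠ y in 𝓝 x, g i y = eval (Sum.elim y (Φ y)) (G i))
    (hP : ∀ k, ∀ᶠ y in 𝓝 x, eval (Sum.elim y (Φ y)) (P k) = 0) :
    eval (Sum.elim x (Φ x)) (polyJacobian (Sum.elim G P)).det =
      (jacobianMatrix g x).det * eval (Sum.elim x (Φ x)) (fiberDet P) := by
  set ev := eval (Sum.elim x (Φ x))
  have hlin : (polyJacobian P).toCols₁.map ev + (polyJacobian P).toCols₂.map ev *
      jacobianMatrix (fun k y => Φ y k) x = 0 := by
    rw [← jacobianMatrix_eq_of_eventually_eq_eval hΦ (g := fun _ _ => 0)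
      fun k => (hP k).mono fun _ hy => hy.symm]
    ext k j
    exact jacobianMatrix_apply_eq_zero_of_eventually_const (.of_forall fun _ => rfl) j
  have hblocks : ev.mapMatrix (polyJacobian (Sum.elim G P)) =
      Matrix.fromBlocks ((polyJacobian G).toCols₁.map ev) ((polyJacobian G).toCols₂.map ev)
        ((polyJacobian P).toCols₁.map ev) ((polyJacobian P).toCols₂.map ev) := by
    ext (i | k) (j | l) <;> rfl
  rw [fiberDet, RingHom.map_det, RingHom.map_det, hblocks,
    det_fromBlocks_of_add_mul_eq_zero _ _ hlin, jacobianMatrix_eq_of_eventually_eq_eval hΦ hg]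
  rfl

end ChainRule

section NowhereLocallyZero

variable {X R : Type*} [TopologicalSpace X]

/-- `D` does not vanish identically on any nonempty open subset of `U`. -/
def NowhereLocallyZeroOn [Zero R] (D : X → R) (U : Set X) : Prop :=
  ∀ V, IsOpen V → V ⊆ U → V.Nonempty → ∃ x ∈ V, D x ≠ 0

lemma NowhereLocallyZeroOn.mono [Zero R] {D D' : X → R} {U V : Set X}
    (h : NowhereLocallyZeroOn D U) (hVU : V ⊆ U) (hD : ∀ x ∈ V, D x ≠ 0 → D' x ≠ 0) :
    NowhereLocallyZeroOn D' V := by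
  intro W hW hWV hne
  obtain ⟨x, hx, hDx⟩ := h W hW (hWV.trans hVU) hne
  exact ⟨x, hx, hD x (hWV hx) hDx⟩

lemma NowhereLocallyZeroOn.mul [MulZeroClass R] [NoZeroDivisors R] [TopologicalSpace R]
    [T1Space R] {D E : X → R} {U : Set X} (hD : NowhereLocallyZeroOn D U)
    (hDc : ContinuousOn D U) (hE : NowhereLocallyZeroOn E U) :
    NowhereLocallyZeroOn (fun x => D x * E x) U := by
  intro V hV hVU hne
  have hopen : IsOpen (V ∩ D ⁻¹' {0}ᶜ) :=
    (hDc.mono hVU).isOpen_inter_preimage hV isOpen_compl_singleton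
  obtain ⟨x, hx, hEx⟩ := hE _ hopen (Set.inter_subset_left.trans hVU) (hD V hV hVU hne)
  exact ⟨x, hx.1, mul_ne_zero hx.2 hEx⟩

lemma NowhereLocallyZeroOn.prod {o : Type*} [CommMonoidWithZero R] [Nontrivial R]
    [NoZeroDivisors R] [TopologicalSpace R] [T1Space R] {D : o → X → R} {U : Set X}
    (s : Finset o) (hD : ∀ i, NowhereLocallyZeroOn (D i) U) (hDc : ∀ i, ContinuousOn (D i) U) :
    NowhereLocallyZeroOn (fun x => ∏ i ∈ s, D i x) U := by
  induction s using Finset.cons_induction with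
  | empty =>
    rintro V - - ⟨x, hx⟩
    exact ⟨x, hx, by simp⟩
  | cons a s ha ih =>
    simp_rw [Finset.prod_cons]
    exact (hD a).mul (hDc a) ih

end NowhereLocallyZero

section Analytic

variable {𝕜 : Type*} [NontriviallyNormedField 𝕜]

lemma analyticAt_det {E n : Type*} [NormedAddCommGroup E] [NormedSpace 𝕜 E] [Fintype n]
    [DecidableEq n] {A : E → Matrix n n 𝕜} {x : E}
    (h : ∀ i j, AnalyticAt 𝕜 (fun y => A y i j) x) : AnalyticAt 𝕜 (fun y => (A y).det) x := by
  simp only [Matrix.det_apply, Units.smul_def, zsmul_eq_mul]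
  exact Finset.analyticAt_fun_sum _ fun e _ =>
    analyticAt_const.mul (Finset.analyticAt_fun_prod _ fun i _ => h _ _)

variable {κ ι : Type*} [Fintype κ] [Fintype ι] {Φ : (κ → 𝕜) → ι → 𝕜} {x : κ → 𝕜}

lemma analyticAt_eval_sumElim (hΦ : AnalyticAt 𝕜 Φ x) (Q : MvPolynomial (κ ⊕ ι) 𝕜) :
    AnalyticAt 𝕜 (fun y => eval (Sum.elim y (Φ y)) Q) x := by
  refine AnalyticAt.aeval_mvPolynomial (f := fun y => Sum.elim y (Φ y)) ?_ Q
  rintro (j | k)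
  · exact (ContinuousLinearMap.proj (R := 𝕜) (φ := fun _ : κ => 𝕜) j).analyticAt x
  · exact analyticAt_pi_iff.1 hΦ k

lemma analyticAt_det_jacobianMatrix [CompleteSpace 𝕜] [DecidableEq κ] {g : κ → (κ → 𝕜) → 𝕜}
    (hg : ∀ i, AnalyticAt 𝕜 (g i) x) : AnalyticAt 𝕜 (fun y => (jacobianMatrix g y).det) x :=
  analyticAt_det fun i j =>
    ((ContinuousLinearMap.apply 𝕜 𝕜 (Pi.single j 1 : κ → 𝕜)).analyticAt _).comp (hg i).fderiv

end Analytic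

section AlgebraicLift

variable {𝕜 κ ι ι' : Type*} [NontriviallyNormedField 𝕜] [Fintype κ] [Fintype ι] [DecidableEq ι]
  [Fintype ι'] [DecidableEq ι']

/-- The notion `IsAlgLift`, over any field and with arbitrary finite types indexing the variables,
so that lifts can be combined over sums of index types. -/
structure IsAlgebraicLift (U : Set (κ → 𝕜)) (Φ : (κ → 𝕜) → ι → 𝕜)
    (p : ι → MvPolynomial (κ ⊕ ι) 𝕜) : Prop where
  analyticOnNhd : AnalyticOnNhd 𝕜 Φ U
  eval_eq_zero : ∀ x ∈ U, ∀ j, eval (Sum.elim x (Φ x)) (p j) = 0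
  nowhereLocallyZeroOn :
    NowhereLocallyZeroOn (fun x => eval (Sum.elim x (Φ x)) (fiberDet p)) U

lemma isAlgLift_iff {d M : ℕ} {U : Set (Fin d → ℝ)} {Φ : (Fin d → ℝ) → Fin M → ℝ}
    {p : Fin M → MvPolynomial (Fin d ⊕ Fin M) ℝ} :
    IsAlgLift d M U Φ p ↔ IsAlgebraicLift U Φ p := by
  have hdet (x : Fin d → ℝ) : (Matrix.of fun j j' : Fin M =>
      eval (Sum.elim x (Φ x)) (pderiv (Sum.inr j') (p j))).det =
        eval (Sum.elim x (Φ x)) (fiberDet p) := by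
    rw [fiberDet, RingHom.map_det]
    rfl
  simp only [IsAlgLift, hdet]
  exact ⟨fun h => ⟨h.1, h.2.1, h.2.2⟩, fun h => ⟨h.1, h.2, h.3⟩⟩

namespace IsAlgebraicLift

variable {U V : Set (κ → 𝕜)} {Φ : (κ → 𝕜) → ι → 𝕜} {p : ι → MvPolynomial (κ ⊕ ι) 𝕜}

lemma totalDegree_pos (h : IsAlgebraicLift U Φ p) (hU : IsOpen U) (hne : U.Nonempty) (j : ι) :
    0 < (p j).totalDegree := by
  rw [Nat.pos_iff_ne_zero]
  intro h0
  obtain ⟨x, -, hx⟩ := h.nowhereLocallyZeroOn U hU subset_rfl hne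
  refine hx ?_
  have hrow : (polyJacobian p).toCols₂.det = 0 := Matrix.det_eq_zero_of_row_eq_zero j fun k => by
    rw [totalDegree_eq_zero_iff_eq_C] at h0
    rw [Matrix.toCols₂_apply, polyJacobian, Matrix.of_apply, h0, pderiv_C]
  simp only [fiberDet, hrow, map_zero]

lemma analyticAt_eval (h : IsAlgebraicLift U Φ p) (Q : MvPolynomial (κ ⊕ ι) 𝕜) {x : κ → 𝕜}
    (hx : x ∈ U) : AnalyticAt 𝕜 (fun y => eval (Sum.elim y (Φ y)) Q) x :=
  analyticAt_eval_sumElim (h.analyticOnNhd x hx) Q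

lemma continuousOn_eval (h : IsAlgebraicLift U Φ p) (Q : MvPolynomial (κ ⊕ ι) 𝕜) :
    ContinuousOn (fun x => eval (Sum.elim x (Φ x)) Q) U := fun _ hx =>
  (h.analyticAt_eval Q hx).continuousAt.continuousWithinAt

lemma reindex (h : IsAlgebraicLift U Φ p) (e : ι ≃ ι') :
    IsAlgebraicLift U (fun x k => Φ x (e.symm k))
      (fun k => rename (Sum.map id e) (p (e.symm k))) where
  analyticOnNhd :=
    analyticOnNhd_pi_iff.2 fun k => analyticOnNhd_pi_iff.1 h.analyticOnNhd (e.symm k)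
  eval_eq_zero x hx k := by
    simpa [eval_sumElim_rename_map_id, Function.comp_def] using h.eval_eq_zero x hx (e.symm k)
  nowhereLocallyZeroOn := by
    simpa [fiberDet_rename_equiv, eval_sumElim_rename_map_id, Function.comp_def]
      using h.nowhereLocallyZeroOn

lemma sigma {o : Type*} [Fintype o] [DecidableEq o] {ι : o → Type*} [∀ i, Fintype (ι i)]
    [∀ i, DecidableEq (ι i)] {Φ : ∀ i, (κ → 𝕜) → ι i → 𝕜}
    {p : ∀ i, ι i → MvPolynomial (κ ⊕ ι i) 𝕜} (h : ∀ i, IsAlgebraicLift U (Φ i) (p i)) :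
    IsAlgebraicLift U (fun x (k : Σ i, ι i) => Φ k.1 x k.2) (sigmaSystem p) where
  analyticOnNhd :=
    analyticOnNhd_pi_iff.2 fun k => analyticOnNhd_pi_iff.1 (h k.1).analyticOnNhd k.2
  eval_eq_zero x hx k := by
    rw [sigmaSystem, eval_sumElim_rename_map_id]
    exact (h k.1).eval_eq_zero x hx k.2
  nowhereLocallyZeroOn := by
    simp only [fiberDet_sigmaSystem, map_prod, eval_sumElim_rename_map_id]
    exact NowhereLocallyZeroOn.prod Finset.univ (fun i => (h i).nowhereLocallyZeroOn)
      fun i => (h i).continuousOn_eval _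

lemma adjoinQuotient (h : IsAlgebraicLift V Φ p) {A B : MvPolynomial (κ ⊕ ι) 𝕜}
    {φ : (κ → 𝕜) → 𝕜} (hφ : AnalyticOnNhd 𝕜 φ V)
    (hB : NowhereLocallyZeroOn (fun x => eval (Sum.elim x (Φ x)) B) V)
    (hφAB : ∀ x ∈ V, eval (Sum.elim x (Φ x)) B * φ x = eval (Sum.elim x (Φ x)) A) :
    IsAlgebraicLift V (fun x => Sum.elim (Φ x) fun _ => φ x) (adjoinQuotient p A B) where
  analyticOnNhd := by
    refine analyticOnNhd_pi_iff.2 ?_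
    rintro (k | _)
    · exact analyticOnNhd_pi_iff.1 h.analyticOnNhd k
    · exact hφ
  eval_eq_zero x hx := by
    rintro (k | _)
    · simpa [StatementThirteen.adjoinQuotient, eval_sumElim_rename_map_id] using
        h.eval_eq_zero x hx k
    · simp [StatementThirteen.adjoinQuotient, quotientEquation, eval_sumElim_rename_map_id,
        hφAB x hx]
  nowhereLocallyZeroOn := by
    simpa [fiberDet_adjoinQuotient, eval_sumElim_rename_map_id] using
      h.nowhereLocallyZeroOn.mul (h.continuousOn_eval _) hB

lemma mono (h : IsAlgebraicLift U Φ p) (hVU : V ⊆ U) : IsAlgebraicLift V Φ p where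
  analyticOnNhd := h.analyticOnNhd.mono hVU
  eval_eq_zero x hx := h.eval_eq_zero x (hVU hx)
  nowhereLocallyZeroOn := h.nowhereLocallyZeroOn.mono hVU fun _ _ => id

variable [DecidableEq κ] {g₁ g₂ : κ → (κ → 𝕜) → 𝕜} {G₁ G₂ : κ → MvPolynomial (κ ⊕ ι) 𝕜}

lemma eval_det_polyJacobian_sumElim (h : IsAlgebraicLift U Φ p) (hU : IsOpen U)
    (hg : ∀ i, ∀ x ∈ U, g₁ i x = eval (Sum.elim x (Φ x)) (G₁ i)) {x : κ → 𝕜} (hx : x ∈ U) :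
    eval (Sum.elim x (Φ x)) (polyJacobian (Sum.elim G₁ p)).det =
      (jacobianMatrix g₁ x).det * eval (Sum.elim x (Φ x)) (fiberDet p) :=
  StatementThirteen.eval_det_polyJacobian_sumElim (h.analyticOnNhd x hx).differentiableAt
    (fun i => Filter.eventually_of_mem (hU.mem_nhds hx) (hg i))
    fun k => Filter.eventually_of_mem (hU.mem_nhds hx) fun y hy => h.eval_eq_zero y hy k

lemma analyticAt_det_jacobianMatrix [CompleteSpace 𝕜] (h : IsAlgebraicLift U Φ p) (hU : IsOpen U)
    (hg : ∀ i, ∀ x ∈ U, g₁ i x = eval (Sum.elim x (Φ x)) (G₁ i)) {x : κ → 𝕜} (hx : x ∈ U) :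
    AnalyticAt 𝕜 (fun y => (jacobianMatrix g₁ y).det) x :=
  StatementThirteen.analyticAt_det_jacobianMatrix fun i => (h.analyticAt_eval (G₁ i) hx).congr <|
    Filter.eventually_of_mem (hU.mem_nhds hx) fun y hy => (hg i y hy).symm

theorem jacobianQuotient [CompleteSpace 𝕜] (h : IsAlgebraicLift U Φ p) (hU : IsOpen U)
    (hg₁ : ∀ i, ∀ x ∈ U, g₁ i x = eval (Sum.elim x (Φ x)) (G₁ i))
    (hg₂ : ∀ i, ∀ x ∈ U, g₂ i x = eval (Sum.elim x (Φ x)) (G₂ i)) :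
    IsAlgebraicLift {x | x ∈ U ∧ (jacobianMatrix g₂ x).det ≠ 0}
      (fun x => Sum.elim (Φ x) fun _ => (jacobianMatrix g₁ x).det / (jacobianMatrix g₂ x).det)
      (StatementThirteen.adjoinQuotient p (polyJacobian (Sum.elim G₁ p)).det
        (polyJacobian (Sum.elim G₂ p)).det) := by
  have hVU : {x | x ∈ U ∧ (jacobianMatrix g₂ x).det ≠ 0} ⊆ U := fun _ hx => hx.1
  refine (h.mono hVU).adjoinQuotient (fun x hx => ?_) ?_ fun x hx => ?_
  · exact (h.analyticAt_det_jacobianMatrix hU hg₁ hx.1).div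
      (h.analyticAt_det_jacobianMatrix hU hg₂ hx.1) hx.2
  · refine h.nowhereLocallyZeroOn.mono hVU fun x hx hdet => ?_
    rw [h.eval_det_polyJacobian_sumElim hU hg₂ hx.1]
    exact mul_ne_zero hx.2 hdet
  · rw [h.eval_det_polyJacobian_sumElim hU hg₁ hx.1, h.eval_det_polyJacobian_sumElim hU hg₂ hx.1,
      mul_right_comm, mul_div_cancel₀ _ hx.2]

end IsAlgebraicLift

end AlgebraicLift

section Complexity

variable {d : ℕ} {U : Set (Fin d → ℝ)}

lemma complexity_le_of_isNashRep {M : ℕ} {f : (Fin d → ℝ) → ℝ} {Φ : (Fin d → ℝ) → Fin M → ℝ}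
    {p : Fin M → MvPolynomial (Fin d ⊕ Fin M) ℝ} {F : MvPolynomial (Fin d ⊕ Fin M) ℝ}
    (h : IsNashRep d M U f Φ p F) :
    complexity d U f ≤ F.totalDegree * ∏ j, (p j).totalDegree := by
  rw [complexity]
  split_ifs
  · exact Nat.zero_le _
  · exact Nat.sInf_le ⟨M, Φ, p, F, h, rfl⟩

lemma exists_isNashRep_complexity_eq {f : (Fin d → ℝ) → ℝ} (hf : IsNash d U f) :
    ∃ (M : ℕ) (Φ : (Fin d → ℝ) → Fin M → ℝ) (p : Fin M → MvPolynomial (Fin d ⊕ Fin M) ℝ)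
      (F : MvPolynomial (Fin d ⊕ Fin M) ℝ), IsNashRep d M U f Φ p F ∧
        complexity d U f = F.totalDegree * ∏ j, (p j).totalDegree := by
  by_cases h0 : ∀ x ∈ U, f x = 0
  · refine ⟨0, 0, 0, 0, ⟨⟨analyticOnNhd_const, fun _ _ j => j.elim0, ?_⟩, ?_⟩, ?_⟩
    · rintro V - - ⟨x, hx⟩
      exact ⟨x, hx, by simp⟩
    · simpa using h0
    · rw [complexity, if_pos h0, totalDegree_zero, zero_mul]
  · rw [complexity, if_neg h0]
    obtain ⟨M, Φ, p, F, h⟩ := hf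
    exact Nat.sInf_mem (s := {c | ∃ M Φ p F, IsNashRep d M U f Φ p F ∧
      c = F.totalDegree * ∏ j, (p j).totalDegree}) ⟨_, M, Φ, p, F, h, rfl⟩

namespace IsAlgebraicLift

variable {ι : Type*} [Fintype ι] [DecidableEq ι] {Φ : (Fin d → ℝ) → ι → ℝ}
  {p : ι → MvPolynomial (Fin d ⊕ ι) ℝ}

lemma exists_isNashRep (h : IsAlgebraicLift U Φ p) {f : (Fin d → ℝ) → ℝ}
    {F : MvPolynomial (Fin d ⊕ ι) ℝ} (hf : ∀ x ∈ U, f x = eval (Sum.elim x (Φ x)) F) :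
    ∃ (M : ℕ) (Φ' : (Fin d → ℝ) → Fin M → ℝ) (p' : Fin M → MvPolynomial (Fin d ⊕ Fin M) ℝ)
      (F' : MvPolynomial (Fin d ⊕ Fin M) ℝ), IsNashRep d M U f Φ' p' F' ∧
        F'.totalDegree * ∏ j, (p' j).totalDegree ≤
          F.totalDegree * ∏ j, (p j).totalDegree := by
  let e := Fintype.equivFin ι
  refine ⟨_, _, _, rename (Sum.map id e) F, ⟨isAlgLift_iff.2 (h.reindex e), fun x hx => ?_⟩, ?_⟩
  · simp [hf x hx, eval_sumElim_rename_map_id, Function.comp_def]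
  · rw [← Equiv.prod_comp e.symm fun j => (p j).totalDegree]
    exact Nat.mul_le_mul (totalDegree_rename_le _ F)
      (Finset.prod_le_prod' fun k _ => totalDegree_rename_le _ (p (e.symm k)))

lemma isNash (h : IsAlgebraicLift U Φ p) {f : (Fin d → ℝ) → ℝ}
    {F : MvPolynomial (Fin d ⊕ ι) ℝ} (hf : ∀ x ∈ U, f x = eval (Sum.elim x (Φ x)) F) :
    IsNash d U f := by
  obtain ⟨M, Φ', p', F', h', -⟩ := h.exists_isNashRep hf
  exact ⟨M, Φ', p', F', h'⟩

lemma complexity_le (h : IsAlgebraicLift U Φ p) {f : (Fin d → ℝ) → ℝ}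
    {F : MvPolynomial (Fin d ⊕ ι) ℝ} (hf : ∀ x ∈ U, f x = eval (Sum.elim x (Φ x)) F) :
    complexity d U f ≤ F.totalDegree * ∏ j, (p j).totalDegree := by
  obtain ⟨M, Φ', p', F', h', hle⟩ := h.exists_isNashRep hf
  exact (complexity_le_of_isNashRep h').trans hle

lemma isNash_jacDet_div (h : IsAlgebraicLift U Φ p) (hU : IsOpen U)
    {g₁ g₂ : Fin d → (Fin d → ℝ) → ℝ} {G₁ G₂ : Fin d → MvPolynomial (Fin d ⊕ ι) ℝ}
    (hg₁ : ∀ i, ∀ x ∈ U, g₁ i x = eval (Sum.elim x (Φ x)) (G₁ i))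
    (hg₂ : ∀ i, ∀ x ∈ U, g₂ i x = eval (Sum.elim x (Φ x)) (G₂ i)) :
    IsNash d {x | x ∈ U ∧ jacDet d g₂ x ≠ 0} (fun x => jacDet d g₁ x / jacDet d g₂ x) :=
  (h.jacobianQuotient hU hg₁ hg₂).isNash (F := X (Sum.inr (Sum.inr ())))
    fun x _ => by rw [eval_X]; rfl

variable {f : Fin (d + 1) → (Fin d → ℝ) → ℝ} {F : Fin (d + 1) → MvPolynomial (Fin d ⊕ ι) ℝ}

lemma complexity_jacDet_div_le (h : IsAlgebraicLift U Φ p) (hd : 0 < d) (hU : IsOpen U)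
    (hf : ∀ i, ∀ x ∈ U, f i x = eval (Sum.elim x (Φ x)) (F i)) :
    complexity d {x | x ∈ U ∧ jacDet d (fun i => f i.succ) x ≠ 0}
        (fun x => jacDet d (fun i => f i.castSucc) x / jacDet d (fun i => f i.succ) x) ≤
      ((∏ i, (F i).totalDegree) * ∏ k, (p k).totalDegree) ^ 2 := by
  by_cases h0 : ∀ x ∈ {x | x ∈ U ∧ jacDet d (fun i => f i.succ) x ≠ 0},
      jacDet d (fun i => f i.castSucc) x / jacDet d (fun i => f i.succ) x = 0
  · rw [complexity, if_pos h0]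
    exact Nat.zero_le _
  push Not at h0
  obtain ⟨x, ⟨hxU, hsucc⟩, hdiv⟩ := h0
  have hcastSucc := (div_ne_zero_iff.1 hdiv).1
  have hfx (i) : ∀ᶠ y in 𝓝 x, f i y = eval (Sum.elim y (Φ y)) (F i) :=
    Filter.eventually_of_mem (hU.mem_nhds hxU) (hf i)
  have hF (i) : 0 < (F i).totalDegree := by
    obtain ⟨j, rfl⟩ | rfl := i.eq_castSucc_or_eq_last
    · exact totalDegree_pos_of_det_jacobianMatrix_ne_zero hcastSucc (hfx j.castSucc)
    · obtain ⟨j, hj⟩ := Fin.exists_succ_eq.2 (Fin.pos_iff_ne_zero.1 (show 0 < Fin.last d from hd))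
      rw [← hj]
      exact totalDegree_pos_of_det_jacobianMatrix_ne_zero hsucc (hfx j.succ)
  have hp := h.totalDegree_pos hU ⟨x, hxU⟩
  set N := (∏ i, (F i).totalDegree) * ∏ k, (p k).totalDegree
  have hpN : ∏ k, (p k).totalDegree ≤ N :=
    Nat.le_mul_of_pos_left _ (Finset.prod_pos fun i _ => hF i)
  have hlift := h.jacobianQuotient hU (fun i => hf i.castSucc) (fun i => hf i.succ)
  calc complexity d _ _
      ≤ (X (R := ℝ) (Sum.inr (Sum.inr ()))).totalDegree * ∏ j, _ :=
        hlift.complexity_le fun x _ => by rw [eval_X]; rfl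
    _ ≤ (∏ k, (p k).totalDegree) * _ := by
        rw [totalDegree_X, one_mul]
        exact prod_totalDegree_adjoinQuotient_le p _ _
    _ ≤ N * N := Nat.mul_le_mul hpN (totalDegree_quotientEquation_det_polyJacobian_le hF hp)
    _ = N ^ 2 := (sq N).symm

end IsAlgebraicLift

lemma exists_common_isAlgebraicLift {n : ℕ} {f : Fin n → (Fin d → ℝ) → ℝ}
    (hf : ∀ i, IsNash d U (f i)) :
    ∃ (M : Fin n → ℕ) (Φ : (Fin d → ℝ) → (Σ i, Fin (M i)) → ℝ)
      (p : (Σ i, Fin (M i)) → MvPolynomial (Fin d ⊕ Σ i, Fin (M i)) ℝ)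
      (F : Fin n → MvPolynomial (Fin d ⊕ Σ i, Fin (M i)) ℝ), IsAlgebraicLift U Φ p ∧
        (∀ i, ∀ x ∈ U, f i x = eval (Sum.elim x (Φ x)) (F i)) ∧
        (∏ i, (F i).totalDegree) * ∏ k, (p k).totalDegree ≤ ∏ i, complexity d U (f i) := by
  choose M Φ p F h hcomplexity using fun i => exists_isNashRep_complexity_eq (hf i)
  refine ⟨M, _, _, fun i => rename (Sum.map id (Sigma.mk i)) (F i),
    .sigma fun i => isAlgLift_iff.1 (h i).1, fun i x hx => ?_, ?_⟩
  · rw [eval_sumElim_rename_map_id]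
    exact (h i).2 x hx
  · simp_rw [hcomplexity, Finset.prod_mul_distrib, Fintype.prod_sigma]
    exact Nat.mul_le_mul (Finset.prod_le_prod' fun i _ => totalDegree_rename_le _ (F i))
      (Finset.prod_le_prod' fun i _ => Finset.prod_le_prod' fun j _ =>
        totalDegree_rename_le _ (p i j))

end Complexity

theorem statement13 (d : ℕ) (hd : 0 < d) (U : Set (Fin d → ℝ)) (hU : IsOpen U)
    (f : Fin (d + 1) → (Fin d → ℝ) → ℝ) (hf : ∀ i, IsNash d U (f i)) :
    IsNash d
        { x : Fin d → ℝ | x ∈ U ∧ jacDet d (fun i => f i.succ) x ≠ 0 }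
        (fun x => jacDet d (fun i => f i.castSucc) x /
          jacDet d (fun i => f i.succ) x) ∧
      complexity d
          { x : Fin d → ℝ | x ∈ U ∧ jacDet d (fun i => f i.succ) x ≠ 0 }
          (fun x => jacDet d (fun i => f i.castSucc) x /
            jacDet d (fun i => f i.succ) x) ≤
        (∏ i : Fin (d + 1), complexity d U (f i)) ^ 2 := by
  obtain ⟨M, Φ, p, F, hΦ, hfF, hdeg⟩ := exists_common_isAlgebraicLift hf
  exact ⟨hΦ.isNash_jacDet_div hU (fun i => hfF i.castSucc) (fun i => hfF i.succ),
    (hΦ.complexity_jacDet_div_le hd hU hfF).trans (Nat.pow_le_pow_left hdeg 2)⟩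

end StatementThirteen
end
end

section
/- Let g₁,…,g_d be Nash functions on an open set U ⊆ ℝ^d and let E ⊆ U be a Borel measurable set such that |g_i(x)| ≤ 1 for every x ∈ E and every i ∈ {1,…,d}. Then ∫_E |det(∂g_i/∂x^j(x))_{i,j=1}^d| dx ≤ 2^d · c(g₁) ⋯ c(g_d). -/
noncomputable section

open scoped BigOperators

namespace StatementFourteen

/-- `Φ` is an algebraic lifting map on `U` with annihilating polynomial map `p`. -/
def IsAlgLift (d M : ℕ) (U : Set (Fin d → ℝ)) (Φ : (Fin d → ℝ) → Fin M → ℝ)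
    (p : Fin M → MvPolynomial (Fin d ⊕ Fin M) ℝ) : Prop :=
  AnalyticOnNhd ℝ Φ U ∧
  (∀ x ∈ U, ∀ j, MvPolynomial.eval (Sum.elim x (Φ x)) (p j) = 0) ∧
  (∀ V : Set (Fin d → ℝ), IsOpen V → V ⊆ U → V.Nonempty →
    ∃ x ∈ V, Matrix.det (Matrix.of fun j j' : Fin M =>
      MvPolynomial.eval (Sum.elim x (Φ x)) (MvPolynomial.pderiv (Sum.inr j') (p j))) ≠ 0)

/-- `f` lifts to the polynomial `F` via the algebraic lifting map `Φ` with
annihilating map `p`. -/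
def IsNashRep (d M : ℕ) (U : Set (Fin d → ℝ)) (f : (Fin d → ℝ) → ℝ)
    (Φ : (Fin d → ℝ) → Fin M → ℝ)
    (p : Fin M → MvPolynomial (Fin d ⊕ Fin M) ℝ)
    (F : MvPolynomial (Fin d ⊕ Fin M) ℝ) : Prop :=
  IsAlgLift d M U Φ p ∧ ∀ x ∈ U, f x = MvPolynomial.eval (Sum.elim x (Φ x)) F

/-- `f` is a Nash function on `U`. -/
def IsNash (d : ℕ) (U : Set (Fin d → ℝ)) (f : (Fin d → ℝ) → ℝ) : Prop :=
  ∃ (M : ℕ) (Φ : (Fin d → ℝ) → Fin M → ℝ)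
    (p : Fin M → MvPolynomial (Fin d ⊕ Fin M) ℝ)
    (F : MvPolynomial (Fin d ⊕ Fin M) ℝ), IsNashRep d M U f Φ p F

open Classical in
/-- The complexity of a Nash function: the minimum of `deg F · deg p¹ ⋯ deg p^M`
over all representations; the zero function has complexity `0`. -/
def complexity (d : ℕ) (U : Set (Fin d → ℝ)) (f : (Fin d → ℝ) → ℝ) : ℕ :=
  if ∀ x ∈ U, f x = 0 then 0
  else sInf { c : ℕ | ∃ (M : ℕ) (Φ : (Fin d → ℝ) → Fin M → ℝ)
    (p : Fin M → MvPolynomial (Fin d ⊕ Fin M) ℝ)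
    (F : MvPolynomial (Fin d ⊕ Fin M) ℝ), IsNashRep d M U f Φ p F ∧
    c = F.totalDegree * ∏ j, (p j).totalDegree }

/-!
Adjoining the lifts as extra unknowns turns a fibre `g = t` into the solution set of the polynomial
system `F i = t i`, `p i = 0`. By the chain rule and a Schur complement, the Jacobian determinant of
this system is `det (∂g/∂x) * ∏ i, det (D_y (p i))`. So, off the null set where some `D_y (p i)` is
singular, the regular points of the fibre are nondegenerate solutions, and Bézout's inequality
bounds their number by the product of all the degrees. The area formula turns this bound on the
multiplicity of `g` into the bound `∏ i, c (g i) * vol (g '' A)` for the integral, and `g '' A` lies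
in a cube of volume `2 ^ d`.

Bézout's inequality for nondegenerate zeros needs no intersection theory: such zeros survive in the
deformation `f i + ε • X i ^ deg (f i)` for small `ε`. For generic `ε` the monomials of degree less
than `deg (f i)` in each `X i` span the coordinate ring of the deformed system, while polynomials
separate the points of any finite set of zeros.

The singular set is null because at almost every zero of a differentiable function its derivative
vanishes as well. Iterating this, an analytic function vanishes to infinite order, hence locally
identically, at almost every one of its zeros.
-/

open MvPolynomial MeasureTheory Set Filter Topology

section Interpolation

variable {σ K : Type*} [Field K]

theorem exists_totalDegree_le_one_eval_eq_one_eval_eq_zero (z w : σ → K) (hzw : z ≠ w) :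
    ∃ q : MvPolynomial σ K, q.totalDegree ≤ 1 ∧ eval z q = 1 ∧ eval w q = 0 := by
  obtain ⟨i, hi⟩ := Function.ne_iff.1 hzw
  refine ⟨C (z i - w i)⁻¹ * (X i - C (w i)), ?_, ?_, by simp⟩
  · calc (C (z i - w i)⁻¹ * (X i - C (w i))).totalDegree
        ≤ (C (z i - w i)⁻¹ : MvPolynomial σ K).totalDegree + (X i - C (w i)).totalDegree :=
          totalDegree_mul _ _
      _ ≤ 0 + (X i : MvPolynomial σ K).totalDegree :=
          add_le_add (totalDegree_C _).le (totalDegree_sub_C_le _ _)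
      _ = 1 := by rw [zero_add, totalDegree_X]
  · simpa using inv_mul_cancel₀ (sub_ne_zero.2 hi)

theorem exists_totalDegree_le_card_eval_eq (Z : Finset (σ → K)) (v : (σ → K) → K) :
    ∃ q : MvPolynomial σ K, q.totalDegree ≤ Z.card ∧ ∀ z ∈ Z, eval z q = v z := by
  classical
  choose! ℓ hℓdeg hℓself hℓother using
    exists_totalDegree_le_one_eval_eq_one_eval_eq_zero (σ := σ) (K := K)
  let L (z : σ → K) : MvPolynomial σ K := ∏ w ∈ Z.erase z, ℓ z w
  have hLdeg (z : σ → K) : (L z).totalDegree ≤ Z.card :=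
    calc (L z).totalDegree ≤ ∑ w ∈ Z.erase z, (ℓ z w).totalDegree := totalDegree_finsetProd _ _
      _ ≤ (Z.erase z).card := by
          simpa using Finset.sum_le_card_nsmul _ _ 1 fun w hw =>
            hℓdeg z w (Finset.ne_of_mem_erase hw).symm
      _ ≤ Z.card := Finset.card_le_card (Z.erase_subset z)
  have hLself (z : σ → K) : eval z (L z) = 1 := by
    rw [map_prod]
    exact Finset.prod_eq_one fun w hw => hℓself z w (Finset.ne_of_mem_erase hw).symm
  have hLother {z w : σ → K} (hw : w ∈ Z) (hne : w ≠ z) : eval w (L z) = 0 := by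
    rw [map_prod]
    exact Finset.prod_eq_zero (Finset.mem_erase.2 ⟨hne, hw⟩) (hℓother z w hne.symm)
  refine ⟨∑ z ∈ Z, v z • L z, ?_, fun w hw => ?_⟩
  · exact totalDegree_finsetSum_le fun z _ => (totalDegree_smul_le _ _).trans (hLdeg z)
  · rw [map_sum, Finset.sum_eq_single_of_mem w hw fun z _ hne => by
      rw [smul_eval, hLother hw hne.symm, mul_zero], smul_eval, hLself, mul_one]

end Interpolation

section Reduction

variable {σ R : Type*} [CommRing R] (f : σ → MvPolynomial σ R)

/-- The polynomials `f i + ε • X i ^ deg (f i)`. For all but finitely many `ε` this deformation of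
the system `f` has no solutions at infinity. -/
def perturbation (ε : R) (i : σ) : MvPolynomial σ R := f i + ε • X i ^ (f i).totalDegree

open Classical in
/-- One rewriting step at a monomial: a factor `X i ^ deg (f i)`, if there is one, is replaced by
`f i`, and a monomial without such a factor is sent to `0`. The index `i` is an arbitrary choice. -/
def reduceMonomial (a : σ →₀ ℕ) : MvPolynomial σ R :=
  if h : ∃ i, (f i).totalDegree ≤ a i then
    monomial (a - Finsupp.single h.choose (f h.choose).totalDegree) 1 * f h.choose
  else 0

/-- The linear extension of `reduceMonomial`. Modulo the perturbed system and the box monomials it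
acts as `-ε`, so these span in bounded degree unless `-ε` is one of its eigenvalues. -/
def reduction : MvPolynomial σ R →ₗ[R] MvPolynomial σ R :=
  (basisMonomials σ R).constr R (reduceMonomial f)

/-- The monomials of degree less than `deg (f i)` in each variable `X i`. They span the quotient by
the ideal of a generic `perturbation f ε`. -/
def boxMonomial [Fintype σ] (c : ∀ i, Fin (f i).totalDegree) : MvPolynomial σ R :=
  ∏ i, X i ^ (c i : ℕ)

theorem reduction_monomial (a : σ →₀ ℕ) : reduction f (monomial a 1) = reduceMonomial f a := by
  simpa only [reduction, coe_basisMonomials] using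
    (basisMonomials σ R).constr_basis R (reduceMonomial f) a

theorem totalDegree_reduceMonomial_le (a : σ →₀ ℕ) :
    (reduceMonomial f a).totalDegree ≤ a.degree := by
  by_cases h : ∃ i, (f i).totalDegree ≤ a i
  · rw [reduceMonomial, dif_pos h]
    set i := h.choose
    set b := a - Finsupp.single i (f i).totalDegree
    calc (monomial b 1 * f i).totalDegree
        ≤ (monomial b (1 : R)).totalDegree + (f i).totalDegree := totalDegree_mul _ _
      _ ≤ b.degree + (f i).totalDegree := by gcongr; exact totalDegree_monomial_le _ _
      _ = (b + Finsupp.single i (f i).totalDegree).degree := by simp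
      _ = a.degree := by rw [tsub_add_cancel_of_le (Finsupp.single_le_iff.2 h.choose_spec)]
  · simp [reduceMonomial, dif_neg h]

theorem reduction_mem_restrictTotalDegree {N : ℕ} {q : MvPolynomial σ R}
    (hq : q ∈ restrictTotalDegree σ R N) : reduction f q ∈ restrictTotalDegree σ R N := by
  rw [q.as_sum, map_sum]
  refine Submodule.sum_mem _ fun a ha => ?_
  rw [← mul_one (coeff a q), ← smul_eq_mul, ← smul_monomial, map_smul, reduction_monomial]
  refine Submodule.smul_mem _ _ ((mem_restrictTotalDegree _ _ _).2 ?_)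
  exact (totalDegree_reduceMonomial_le f a).trans
    ((le_totalDegree ha).trans ((mem_restrictTotalDegree _ _ _).1 hq))

theorem reduceMonomial_add_smul_mem_span_perturbation (ε : R) {a : σ →₀ ℕ}
    (h : ∃ i, (f i).totalDegree ≤ a i) :
    reduceMonomial f a + ε • monomial a 1 ∈ Ideal.span (range (perturbation f ε)) := by
  have hfactor : reduceMonomial f a + ε • monomial a 1 =
      monomial (a - Finsupp.single h.choose (f h.choose).totalDegree) 1 *
        perturbation f ε h.choose := by
    rw [reduceMonomial, dif_pos h, perturbation, mul_add, mul_smul_comm, X_pow_eq_monomial,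
      monomial_mul, one_mul, tsub_add_cancel_of_le (Finsupp.single_le_iff.2 h.choose_spec)]
  rw [hfactor]
  exact Ideal.mul_mem_left _ _ (Ideal.subset_span ⟨_, rfl⟩)

theorem reduction_add_smul_mem [Fintype σ] (ε : R) (q : MvPolynomial σ R) :
    reduction f q + ε • q ∈ (Ideal.span (range (perturbation f ε))).restrictScalars R ⊔
      Submodule.span R (range (boxMonomial f)) := by
  set V := (Ideal.span (range (perturbation f ε))).restrictScalars R ⊔
    Submodule.span R (range (boxMonomial f))
  suffices h : ⊤ ≤ V.comap (reduction f + ε • LinearMap.id) from h (Submodule.mem_top (x := q))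
  rw [← (basisMonomials σ R).span_eq, Submodule.span_le]
  rintro _ ⟨a, rfl⟩
  rw [coe_basisMonomials]
  change reduction f (monomial a 1) + ε • monomial a 1 ∈ V
  rw [reduction_monomial]
  by_cases h : ∃ i, (f i).totalDegree ≤ a i
  · exact Submodule.mem_sup_left (reduceMonomial_add_smul_mem_span_perturbation f ε h)
  · rw [reduceMonomial, dif_neg h, zero_add]
    push Not at h
    refine V.smul_mem _ (Submodule.mem_sup_right (Submodule.subset_span ⟨fun i => ⟨a i, h i⟩, ?_⟩))
    rw [boxMonomial, monomial_eq, C_1, one_mul, Finsupp.prod_fintype _ _ fun i => pow_zero _]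

end Reduction

section PerturbedBezout

variable {σ K : Type*} [Fintype σ] [Field K] (f : σ → MvPolynomial σ K)

theorem exists_finite_forall_mem_span_perturbation_sup_span_boxMonomial (N : ℕ) :
    ∃ B : Set K, B.Finite ∧ ∀ ε ∉ B, ∀ q : MvPolynomial σ K, q.totalDegree ≤ N →
      q ∈ (Ideal.span (range (perturbation f ε))).restrictScalars K ⊔
        Submodule.span K (range (boxMonomial f)) := by
  let P := restrictTotalDegree σ K N
  let T : Module.End K P := (reduction f).restrict fun _ => reduction_mem_restrictTotalDegree f
  refine ⟨Neg.neg ⁻¹' spectrum K T,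
    (Module.End.finite_spectrum T).preimage neg_injective.injOn, fun ε hε q hq => ?_⟩
  have hunit : IsUnit (algebraMap K (Module.End K P) (-ε) - T) := not_not.1 hε
  obtain ⟨r, hr⟩ := ((Module.End.isUnit_iff _).1 hunit).2 ⟨q, (mem_restrictTotalDegree _ _ _).2 hq⟩
  have hq_eq : q = -(reduction f r + ε • (r : MvPolynomial σ K)) := by
    have := congrArg Subtype.val hr
    simp only [map_neg, LinearMap.sub_apply, LinearMap.neg_apply, Module.algebraMap_end_apply,
      Submodule.coe_sub, Submodule.coe_neg, Submodule.coe_smul] at this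
    rw [← this, neg_add', sub_eq_add_neg, add_comm, ← sub_eq_add_neg]
    rfl
  rw [hq_eq]
  exact Submodule.neg_mem _ (reduction_add_smul_mem f ε r)

theorem exists_finite_forall_card_zeros_perturbation_le (N : ℕ) :
    ∃ B : Set K, B.Finite ∧ ∀ ε ∉ B, ∀ Z : Finset (σ → K), Z.card ≤ N →
      (∀ z ∈ Z, ∀ i, eval z (perturbation f ε i) = 0) → Z.card ≤ ∏ i, (f i).totalDegree := by
  obtain ⟨B, hB, hspan⟩ := exists_finite_forall_mem_span_perturbation_sup_span_boxMonomial f N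
  refine ⟨B, hB, fun ε hε Z hZN hZ => ?_⟩
  let ev : MvPolynomial σ K →ₗ[K] (Z → K) := LinearMap.pi fun z => (aeval z.1).toLinearMap
  have ev_apply (q : MvPolynomial σ K) (z : Z) : ev q z = eval z.1 q := by
    simp [ev]
  have hker : (Ideal.span (range (perturbation f ε))).restrictScalars K ≤ LinearMap.ker ev := by
    intro q hq
    ext z
    have hle : Ideal.span (range (perturbation f ε)) ≤ RingHom.ker (eval z.1) :=
      Ideal.span_le.2 (range_subset_iff.2 fun i => hZ z z.2 i)
    simpa [ev_apply] using hle hq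
  have hbox : Submodule.span K (range (ev ∘ boxMonomial f)) = ⊤ := by
    classical
    refine eq_top_iff.2 fun v _ => ?_
    obtain ⟨q, hqdeg, hq⟩ :=
      exists_totalDegree_le_card_eval_eq Z fun z => if hz : z ∈ Z then v ⟨z, hz⟩ else 0
    obtain ⟨p, hp, b, hb, rfl⟩ := Submodule.mem_sup.1 (hspan ε hε q (hqdeg.trans hZN))
    have hv : v = ev b := by
      ext z
      have := hq z z.2
      rw [dif_pos z.2, ← ev_apply _ z, map_add, LinearMap.mem_ker.1 (hker hp), zero_add] at this
      exact this.symm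
    rw [hv, range_comp, ← Submodule.map_span]
    exact Submodule.mem_map_of_mem hb
  classical
  calc Z.card = Module.finrank K (Z → K) := by simp
    _ = (range (ev ∘ boxMonomial f)).finrank K := by rw [Set.finrank, hbox, finrank_top]
    _ ≤ Fintype.card (∀ i, Fin (f i).totalDegree) := finrank_range_le_card _
    _ = ∏ i, (f i).totalDegree := by simp

end PerturbedBezout

section NondegenerateBezout

variable {𝕜 : Type*} [NontriviallyNormedField 𝕜]

theorem eventually_exists_mem_add_smul_eq_zero [CompleteSpace 𝕜] {E F : Type*}
    [NormedAddCommGroup E] [NormedSpace 𝕜 E] [CompleteSpace E]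
    [NormedAddCommGroup F] [NormedSpace 𝕜 F] [CompleteSpace F]
    {f h : E → F} {f' h' : E →L[𝕜] F} {z : E} (hf : HasStrictFDerivAt f f' z)
    (hh : HasStrictFDerivAt h h' z) (hf' : Function.Surjective f') (hz : f z = 0)
    {W : Set E} (hW : W ∈ 𝓝 z) :
    ∀ᶠ ε : 𝕜 in 𝓝 0, ∃ y ∈ W, f y + ε • h y = 0 := by
  let G : 𝕜 × E → 𝕜 × F := fun q => (q.1, f q.2 + q.1 • h q.2)
  have hG := (hasStrictFDerivAt_fst (𝕜 := 𝕜) (p := ((0 : 𝕜), z))).prodMk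
    ((hf.comp ((0 : 𝕜), z) hasStrictFDerivAt_snd).add
      ((hasStrictFDerivAt_fst (𝕜 := 𝕜)).smul (hh.comp ((0 : 𝕜), z) hasStrictFDerivAt_snd)))
  have hGopen : map G (𝓝 (0, z)) = 𝓝 (G (0, z)) := by
    refine hG.map_nhds_eq_of_surj (LinearMap.range_eq_top.2 ?_)
    rintro ⟨a, w⟩
    obtain ⟨u, hu⟩ := hf' (w - a • h z)
    exact ⟨(a, u), by simp [hu]⟩
  have himage : G '' (Prod.snd ⁻¹' W) ∈ 𝓝 ((0 : 𝕜), (0 : F)) := by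
    have hG0 : G (0, z) = (0, 0) := by simp [G, hz]
    rw [← hG0, ← hGopen]
    exact image_mem_map (continuousAt_snd hW)
  have hline : ContinuousAt (fun ε : 𝕜 => (ε, (0 : F))) 0 := by fun_prop
  filter_upwards [hline himage] with ε hε
  obtain ⟨⟨a, y⟩, hy, hGy⟩ := hε
  obtain ⟨rfl, hzero⟩ := Prod.mk.inj hGy
  exact ⟨y, hy, hzero⟩

theorem hasStrictFDerivAt_eval {σ : Type*} [Fintype σ] (q : MvPolynomial σ 𝕜) (z : σ → 𝕜) :
    HasStrictFDerivAt (fun x => eval x q)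
      (∑ j, eval z (pderiv j q) • (ContinuousLinearMap.proj j : (σ → 𝕜) →L[𝕜] 𝕜)) z := by
  induction q using MvPolynomial.induction_on with
  | C a =>
    simp only [eval_C]
    refine (hasStrictFDerivAt_const a z).congr_fderiv ?_
    ext w
    simp
  | add p q hp hq =>
    simp only [map_add]
    refine (hp.fun_add hq).congr_fderiv ?_
    ext w
    simp [add_mul, Finset.sum_add_distrib]
  | mul_X p i hp =>
    classical
    simp only [map_mul, eval_X]
    refine (hp.mul (hasStrictFDerivAt_apply i z)).congr_fderiv ?_
    ext w
    simp [pderiv_X, Pi.single_apply, Finset.sum_add_distrib, Finset.mul_sum, add_mul, mul_assoc,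
      apply_ite]

/-- The Jacobian matrix of a family of polynomials, with formal partial derivatives, evaluated at
a point. -/
def formalJacobian {σ κ R : Type*} [CommSemiring R] (f : κ → MvPolynomial σ R) (z : σ → R) :
    Matrix κ σ R :=
  Matrix.of fun i j => eval z (pderiv j (f i))

variable {σ : Type*} [Fintype σ] [DecidableEq σ]

theorem exists_hasStrictFDerivAt_eval_surjective {f : σ → MvPolynomial σ 𝕜}
    {z : σ → 𝕜} (h : (formalJacobian f z).det ≠ 0) :
    ∃ f' : (σ → 𝕜) →L[𝕜] (σ → 𝕜),
      HasStrictFDerivAt (fun x i => eval x (f i)) f' z ∧ Function.Surjective f' := by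
  refine ⟨_, hasStrictFDerivAt_pi.2 fun i => hasStrictFDerivAt_eval (f i) z, fun v => ?_⟩
  obtain ⟨w, hw⟩ := Matrix.mulVec_surjective_iff_isUnit.2
    ((Matrix.isUnit_iff_isUnit_det _).2 h.isUnit) v
  refine ⟨w, ?_⟩
  rw [← hw]
  ext i
  simp [formalJacobian, Matrix.mulVec, dotProduct]

theorem card_le_prod_totalDegree_of_det_formalJacobian_ne_zero [CompleteSpace 𝕜]
    (f : σ → MvPolynomial σ 𝕜) (Z : Finset (σ → 𝕜)) (hZ : ∀ z ∈ Z, ∀ i, eval z (f i) = 0)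
    (hdet : ∀ z ∈ Z, (formalJacobian f z).det ≠ 0) : Z.card ≤ ∏ i, (f i).totalDegree := by
  classical
  obtain ⟨B, hB, hcard⟩ := exists_finite_forall_card_zeros_perturbation_le f Z.card
  obtain ⟨V, hV, hVdisj⟩ := Z.finite_toSet.t2_separation
  have hpersist : ∀ᶠ ε : 𝕜 in 𝓝 0, ∀ z ∈ Z, ∃ y ∈ V z, ∀ i, eval y (perturbation f ε i) = 0 := by
    refine (Finset.eventually_all Z).2 fun z hz => ?_
    obtain ⟨f', hf', hsurj⟩ := exists_hasStrictFDerivAt_eval_surjective (hdet z hz)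
    have hpow := hasStrictFDerivAt_pi.2 fun i =>
      (hasStrictFDerivAt_apply (𝕜 := 𝕜) i z).pow (f i).totalDegree
    filter_upwards [eventually_exists_mem_add_smul_eq_zero hf' hpow hsurj
      (funext (hZ z hz)) ((hV z).2.mem_nhds (hV z).1)] with ε ⟨y, hyV, hy⟩
    exact ⟨y, hyV, fun i => by simpa [perturbation] using congrFun hy i⟩
  obtain ⟨ε, hε, hεB⟩ := (infinite_of_mem_nhds 0 hpersist).exists_notMem_finite hB
  choose! y hyV hy using hε
  have hinj : Set.InjOn y Z := fun z hz w hw hzw => by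
    by_contra hne
    exact disjoint_left.1 (hVdisj hz hw hne) (hyV z hz) (hzw ▸ hyV w hw)
  rw [← Finset.card_image_of_injOn hinj]
  exact hcard ε hεB _ Finset.card_image_le (Finset.forall_mem_image.2 hy)

end NondegenerateBezout

section AnalyticZeros

variable {E F : Type*} [NormedAddCommGroup E] [NormedSpace ℝ E] [FiniteDimensional ℝ E]
  [MeasurableSpace E] [BorelSpace E] (μ : Measure E) [μ.IsAddHaarMeasure]
  [NormedAddCommGroup F] [NormedSpace ℝ F] {U : Set E}

theorem ae_fderiv_eq_zero_of_eq_zero_real (hU : IsOpen U) {s : E → ℝ}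
    (hs : ∀ x ∈ U, DifferentiableAt ℝ s x) :
    ∀ᵐ x ∂μ, x ∈ U → s x = 0 → fderiv ℝ s x = 0 := by
  rcases subsingleton_or_nontrivial E with _ | _
  · exact .of_forall fun x _ _ => Subsingleton.elim _ _
  obtain ⟨e, he⟩ := exists_ne (0 : E)
  let Z := U \ (U ∩ s ⁻¹' {0}ᶜ)
  have hZ {x : E} : x ∈ Z ↔ x ∈ U ∧ s x = 0 := by simp [Z]
  have hZmeas : MeasurableSet Z := hU.measurableSet.diff
    (ContinuousOn.isOpen_inter_preimage (fun x hx => (hs x hx).continuousAt.continuousWithinAt) hU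
      isOpen_compl_singleton).measurableSet
  -- On `Z` the zero map approximates `s • e` with error constant `0`, which forces the derivative
  -- to vanish at almost every point of `Z`.
  have happrox : ApproximatesLinearOn (fun x => s x • e) (0 : E →L[ℝ] E) Z 0 := by
    intro x hx y hy
    simp [(hZ.1 hx).2, (hZ.1 hy).2]
  have hderiv := happrox.norm_fderiv_sub_le μ hZmeas (fun x => (fderiv ℝ s x).smulRight e)
    fun x hx => ((hs x (hZ.1 hx).1).hasFDerivAt.smul_const e).hasFDerivWithinAt
  filter_upwards [(ae_restrict_iff' hZmeas).1 hderiv] with x hx hxU hx0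
  simpa [he] using hx (hZ.2 ⟨hxU, hx0⟩)

theorem ae_fderiv_eq_zero_of_eq_zero [FiniteDimensional ℝ F] (hU : IsOpen U) {s : E → F}
    (hs : ∀ x ∈ U, DifferentiableAt ℝ s x) :
    ∀ᵐ x ∂μ, x ∈ U → s x = 0 → fderiv ℝ s x = 0 := by
  let coord (i : Fin (Module.finrank ℝ F)) : F →L[ℝ] ℝ :=
    ((Module.finBasis ℝ F).coord i).toContinuousLinearMap
  have hcoord : ∀ᵐ x ∂μ, ∀ i, x ∈ U → coord i (s x) = 0 → fderiv ℝ (coord i ∘ s) x = 0 :=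
    ae_all_iff.2 fun i => ae_fderiv_eq_zero_of_eq_zero_real μ hU fun x hx =>
      (coord i).differentiableAt.comp x (hs x hx)
  filter_upwards [hcoord] with x hx hxU hx0
  ext v
  refine (Module.finBasis ℝ F).ext_elem fun i => ?_
  have h := hx i hxU (by rw [hx0, map_zero])
  rw [((coord i).hasFDerivAt.comp x (hs x hxU).hasFDerivAt).fderiv] at h
  simpa [coord] using congrArg (fun L => L v) h

theorem ae_iteratedFDeriv_eq_zero_of_eq_zero [FiniteDimensional ℝ F] (hU : IsOpen U) {s : E → F}
    (hs : AnalyticOnNhd ℝ s U) (k : ℕ) :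
    ∀ᵐ x ∂μ, x ∈ U → s x = 0 → iteratedFDeriv ℝ k s x = 0 := by
  induction k with
  | zero =>
    refine .of_forall fun x _ hx => ?_
    ext
    simpa using hx
  | succ k ih =>
    have : FiniteDimensional ℝ (E [×k]→L[ℝ] F) :=
      FiniteDimensional.of_injective ContinuousMultilinearMap.toMultilinearMapLinear
        ContinuousMultilinearMap.toMultilinearMap_injective
    filter_upwards [ih, ae_fderiv_eq_zero_of_eq_zero μ hU fun x hx =>
      (hs.iteratedFDeriv k x hx).differentiableAt] with x hk hfderiv hxU hx0
    ext m
    rw [iteratedFDeriv_succ_apply_left, hfderiv hxU (hk hxU hx0)]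
    rfl

theorem eventually_eq_zero_of_iteratedFDeriv_eq_zero {𝕜 E F : Type*} [NontriviallyNormedField 𝕜]
    [CharZero 𝕜] [NormedAddCommGroup E] [NormedSpace 𝕜 E] [NormedAddCommGroup F] [NormedSpace 𝕜 F]
    [CompleteSpace F] {s : E → F} {x : E} (hs : AnalyticAt 𝕜 s x)
    (h : ∀ k, iteratedFDeriv 𝕜 k s x = 0) : ∀ᶠ y in 𝓝 x, s y = 0 := by
  obtain ⟨p, r, hp⟩ := hs
  filter_upwards [Metric.eball_mem_nhds x hp.r_pos] with y hy
  have hsum := hp.hasSum_iteratedFDeriv (y := y - x) (by simpa [edist_eq_enorm_sub] using hy)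
  simp only [h, add_sub_cancel] at hsum
  simpa using hsum.unique (by simp)

theorem ae_ne_zero_of_analyticOnNhd [FiniteDimensional ℝ F] (hU : IsOpen U) {s : E → F}
    (hs : AnalyticOnNhd ℝ s U)
    (hne : ∀ V, IsOpen V → V ⊆ U → V.Nonempty → ∃ x ∈ V, s x ≠ 0) :
    ∀ᵐ x ∂μ, x ∈ U → s x ≠ 0 := by
  filter_upwards [ae_all_iff.2 fun k => ae_iteratedFDeriv_eq_zero_of_eq_zero μ hU hs k]
    with x hx hxU hx0
  have hzero := eventually_eq_zero_of_iteratedFDeriv_eq_zero (hs x hxU) fun k => hx k hxU hx0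
  obtain ⟨V, hV, hVopen, hxV⟩ := eventually_nhds_iff.1 (hzero.and (hU.mem_nhds hxU))
  obtain ⟨y, hyV, hy⟩ := hne V hVopen (fun y hy => (hV y hy).2) ⟨x, hxV⟩
  exact hy (hV y hyV).1

end AnalyticZeros

section AreaFormula

theorem tsum_measure_le_mul_measure_iUnion {α ι : Type*} [Countable ι] [MeasurableSpace α]
    (μ : Measure α) {S : ι → Set α} (hS : ∀ n, MeasurableSet (S n)) {N : ℕ}
    (hN : ∀ y, {n | y ∈ S n}.encard ≤ N) : ∑' n, μ (S n) ≤ N * μ (⋃ n, S n) := by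
  have hmult (y : α) : ∑' n, (S n).indicator 1 y = ({n | y ∈ S n}.encard : ENNReal) := by
    rw [← ENNReal.tsum_set_one, tsum_subtype _ fun _ => (1 : ENNReal)]
    rfl
  calc ∑' n, μ (S n) = ∫⁻ y, ∑' n, (S n).indicator 1 y ∂μ := by
        rw [lintegral_tsum fun n => (measurable_one.indicator (hS n)).aemeasurable]
        simp only [lintegral_indicator_one (hS _)]
    _ ≤ ∫⁻ y, (⋃ n, S n).indicator (fun _ => (N : ENNReal)) y ∂μ := by
        refine lintegral_mono fun y => ?_
        by_cases hy : y ∈ ⋃ n, S n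
        · rw [indicator_of_mem hy, hmult]
          simpa using ENat.toENNReal_le.2 (hN y)
        · have hempty : {n | y ∈ S n} = ∅ := by
            simpa [eq_empty_iff_forall_notMem] using hy
          rw [hmult, hempty]
          simp
    _ = N * μ (⋃ n, S n) := lintegral_indicator_const (.iUnion hS) _

variable {E : Type*} [NormedAddCommGroup E] [NormedSpace ℝ E] [FiniteDimensional ℝ E]

theorem exists_ne_zero_forall_approximatesLinearOn_injOn {L : E →L[ℝ] E} (hL : L.det ≠ 0) :
    ∃ r : NNReal, r ≠ 0 ∧ ∀ (f : E → E) (s : Set E), ApproximatesLinearOn f L s r → InjOn f s := by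
  rcases subsingleton_or_nontrivial E with _ | _
  · exact ⟨1, one_ne_zero, fun f s _ => injOn_of_subsingleton f s⟩
  let e := L.toContinuousLinearEquivOfDetNeZero hL
  have hpos : 0 < ‖(e.symm : E →L[ℝ] E)‖₊⁻¹ := inv_pos.2 e.nnnorm_symm_pos
  exact ⟨_, (half_pos hpos).ne', fun f s h =>
    ApproximatesLinearOn.injOn (f' := e) h (.inr (half_lt_self hpos))⟩

variable [MeasurableSpace E] [BorelSpace E] (μ : Measure E) [μ.IsAddHaarMeasure]
  {f : E → E} {f' : E → E →L[ℝ] E} {s : Set E} {N : ℕ}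

theorem exists_measurable_partition_injOn (hf : ∀ x ∈ s, HasFDerivWithinAt f (f' x) s x)
    (hdet : ∀ x ∈ s, (f' x).det ≠ 0) :
    ∃ t : ℕ → Set E, Pairwise (Function.onFun Disjoint t) ∧ (∀ n, MeasurableSet (t n)) ∧
      s ⊆ ⋃ n, t n ∧ ∀ n, InjOn f (s ∩ t n) := by
  have hradius (L : E →L[ℝ] E) : ∃ r : NNReal, r ≠ 0 ∧
      (L.det ≠ 0 → ∀ (f : E → E) (s : Set E), ApproximatesLinearOn f L s r → InjOn f s) := by
    by_cases hL : L.det = 0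
    · exact ⟨1, one_ne_zero, fun h => (h hL).elim⟩
    · obtain ⟨r, hr, h⟩ := exists_ne_zero_forall_approximatesLinearOn_injOn hL
      exact ⟨r, hr, fun _ => h⟩
  choose r hr hinj using hradius
  obtain ⟨t, L, hdisj, hmeas, hcover, happrox, hmem⟩ :=
    exists_partition_approximatesLinearOn_of_hasFDerivWithinAt f s f' hf r hr
  refine ⟨t, hdisj, hmeas, hcover, fun n x hx => ?_⟩
  obtain ⟨y, hy, hLy⟩ := hmem ⟨x, hx.1⟩ n
  exact hinj (L n) (hLy ▸ hdet y hy) f _ (happrox n) hx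

theorem lintegral_abs_det_fderiv_le_mul_addHaar_image (hs : MeasurableSet s)
    (hf : ∀ x ∈ s, HasFDerivWithinAt f (f' x) s x) (hdet : ∀ x ∈ s, (f' x).det ≠ 0)
    (hN : ∀ y, (s ∩ f ⁻¹' {y}).encard ≤ N) :
    ∫⁻ x in s, ENNReal.ofReal |(f' x).det| ∂μ ≤ N * μ (f '' s) := by
  obtain ⟨t, hdisj, hmeas, hcover, hinj⟩ := exists_measurable_partition_injOn hf hdet
  have hpiece (n : ℕ) : MeasurableSet (s ∩ t n) := hs.inter (hmeas n)
  have hunion : ⋃ n, s ∩ t n = s := by rw [← inter_iUnion, inter_eq_left.2 hcover]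
  have hderiv (n : ℕ) : ∀ x ∈ s ∩ t n, HasFDerivWithinAt f (f' x) (s ∩ t n) x := fun x hx =>
    (hf x hx.1).mono inter_subset_left
  have hmult (y : E) : {n | y ∈ f '' (s ∩ t n)}.encard ≤ N := by
    choose! z hz hzy using fun (n : ℕ) (hn : y ∈ f '' (s ∩ t n)) => hn
    have hzinj : InjOn z {n | y ∈ f '' (s ∩ t n)} := fun m hm n hn hmn => by
      by_contra hne
      exact disjoint_left.1 (hdisj hne) (hz m hm).2 (hmn ▸ (hz n hn).2)
    have hzmaps : MapsTo z {n | y ∈ f '' (s ∩ t n)} (s ∩ f ⁻¹' {y}) := fun n hn =>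
      ⟨(hz n hn).1, hzy n hn⟩
    exact (encard_le_encard_of_injOn hzmaps hzinj).trans (hN y)
  calc ∫⁻ x in s, ENNReal.ofReal |(f' x).det| ∂μ
      = ∑' n, ∫⁻ x in s ∩ t n, ENNReal.ofReal |(f' x).det| ∂μ := by
        conv_lhs => rw [← hunion]
        exact lintegral_iUnion hpiece
          (hdisj.mono fun _ _ h => h.mono inter_subset_right inter_subset_right) _
    _ = ∑' n, μ (f '' (s ∩ t n)) := by
        simp only [lintegral_abs_det_fderiv_eq_addHaar_image μ (hpiece _) (hderiv _) (hinj _)]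
    _ ≤ N * μ (⋃ n, f '' (s ∩ t n)) := tsum_measure_le_mul_measure_iUnion μ
        (fun n => measurable_image_of_fderivWithin (hpiece n) (hderiv n) (hinj n)) hmult
    _ = N * μ (f '' s) := by rw [← image_iUnion, hunion]

theorem lintegral_abs_det_fderiv_le_mul_addHaar_image_of_encard_regular_le (hs : MeasurableSet s)
    (hf : ∀ x ∈ s, DifferentiableAt ℝ f x)
    (hN : ∀ y, {x ∈ s | f x = y ∧ (fderiv ℝ f x).det ≠ 0}.encard ≤ N) :
    ∫⁻ x in s, ENNReal.ofReal |(fderiv ℝ f x).det| ∂μ ≤ N * μ (f '' s) := by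
  let R := {x | (fderiv ℝ f x).det ≠ 0}
  have hR : MeasurableSet R :=
    (ContinuousLinearMap.continuous_det.measurable.comp (measurable_fderiv ℝ f))
      (measurableSet_singleton 0).compl
  have hfibre (y : E) : ((s ∩ R) ∩ f ⁻¹' {y}).encard ≤ N := by
    refine (encard_le_encard ?_).trans (hN y)
    exact fun x hx => ⟨hx.1.1, hx.2, hx.1.2⟩
  calc ∫⁻ x in s, ENNReal.ofReal |(fderiv ℝ f x).det| ∂μ
      = ∫⁻ x in s ∩ R, ENNReal.ofReal |(fderiv ℝ f x).det| ∂μ := by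
        rw [inter_comm, ← Measure.restrict_restrict hR]
        refine (setLIntegral_eq_of_support_subset fun x hx h0 => ?_).symm
        simp_all
    _ ≤ N * μ (f '' (s ∩ R)) := lintegral_abs_det_fderiv_le_mul_addHaar_image μ (hs.inter hR)
        (fun x hx => (hf x hx.1).hasFDerivAt.hasFDerivWithinAt) (fun x hx => hx.2) hfibre
    _ ≤ N * μ (f '' s) := by gcongr; exact inter_subset_left

end AreaFormula

section GraphJacobian

variable {𝕜 ι J κ : Type*} [NontriviallyNormedField 𝕜] [DecidableEq ι]

/-- The Jacobian matrix `∂g i / ∂x j` of a family of functions, a partial derivative being the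
Fréchet derivative along a standard basis vector. -/
def jacobian (g : κ → (ι → 𝕜) → 𝕜) (x : ι → 𝕜) : Matrix κ ι 𝕜 :=
  Matrix.of fun i j => fderiv 𝕜 (g i) x (Pi.single j 1)

theorem jacobian_congr {g h : κ → (ι → 𝕜) → 𝕜} {x : ι → 𝕜} (hgh : ∀ i, g i =ᶠ[𝓝 x] h i) :
    jacobian g x = jacobian h x := by
  ext i j
  rw [jacobian, jacobian, Matrix.of_apply, Matrix.of_apply, (hgh i).fderiv_eq]

theorem det_fderiv_pi [Fintype ι] {g : ι → (ι → 𝕜) → 𝕜} {x : ι → 𝕜}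
    (hg : ∀ i, DifferentiableAt 𝕜 (g i) x) :
    (fderiv 𝕜 (fun x i => g i x) x).det = (jacobian g x).det := by
  rw [fderiv_pi hg, ContinuousLinearMap.det, ← LinearMap.det_toMatrix']
  congr 1

theorem jacobian_eval_graph [Finite ι] [Fintype J] (q : κ → MvPolynomial (ι ⊕ J) 𝕜)
    {Φ : (ι → 𝕜) → J → 𝕜} {x : ι → 𝕜} (hΦ : DifferentiableAt 𝕜 Φ x) :
    jacobian (fun k y => eval (Sum.elim y (Φ y)) (q k)) x =
      (formalJacobian q (Sum.elim x (Φ x))).toCols₁ +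
        (formalJacobian q (Sum.elim x (Φ x))).toCols₂ * jacobian (fun j y => Φ y j) x := by
  cases nonempty_fintype ι
  have hgraph : HasFDerivAt (fun y => Sum.elim y (Φ y)) (ContinuousLinearMap.pi
      (Sum.rec ContinuousLinearMap.proj fun j => fderiv 𝕜 (fun y => Φ y j) x)) x := by
    refine hasFDerivAt_pi.2 fun c => ?_
    cases c with
    | inl i => exact hasFDerivAt_apply i x
    | inr j => exact (differentiableAt_pi.1 hΦ j).hasFDerivAt
  ext k i
  have hcomp :=
    ((hasStrictFDerivAt_eval (q k) (Sum.elim x (Φ x))).hasFDerivAt.comp x hgraph).fderiv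
  rw [Function.comp_def] at hcomp
  rw [jacobian, Matrix.of_apply, hcomp]
  simp [formalJacobian, jacobian, Matrix.mul_apply, Pi.single_apply]

variable [Fintype ι] [Fintype J] [DecidableEq J]

theorem det_fromBlocks_eq_mul_of_add_mul_eq_zero {R : Type*} [CommRing R]
    {A : Matrix ι ι R} {B : Matrix ι J R} {C : Matrix J ι R} {D : Matrix J J R}
    {X : Matrix J ι R} (h : C + D * X = 0) :
    (Matrix.fromBlocks A B C D).det = (A + B * X).det * D.det := by
  calc (Matrix.fromBlocks A B C D).det
      = (Matrix.fromBlocks A B C D * Matrix.fromBlocks 1 0 X 1).det := by simp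
    _ = (Matrix.fromBlocks (A + B * X) B 0 D).det := by simp [Matrix.fromBlocks_multiply, h]
    _ = (A + B * X).det * D.det := Matrix.det_fromBlocks_zero₂₁ _ _ _

variable {F : ι → MvPolynomial (ι ⊕ J) 𝕜} {p : J → MvPolynomial (ι ⊕ J) 𝕜}
  {Φ : (ι → 𝕜) → J → 𝕜}

theorem det_formalJacobian_elim_eq_mul {x : ι → 𝕜} (hΦ : DifferentiableAt 𝕜 Φ x)
    (hp : ∀ᶠ y in 𝓝 x, ∀ j, eval (Sum.elim y (Φ y)) (p j) = 0) :
    (formalJacobian (Sum.elim F p) (Sum.elim x (Φ x))).det =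
      (jacobian (fun i y => eval (Sum.elim y (Φ y)) (F i)) x).det *
        (formalJacobian p (Sum.elim x (Φ x))).toCols₂.det := by
  have hzero : jacobian (fun j y => eval (Sum.elim y (Φ y)) (p j)) x = 0 := by
    have hconst (j : J) : (fun y => eval (Sum.elim y (Φ y)) (p j)) =ᶠ[𝓝 x] fun _ => 0 :=
      hp.mono fun y hy => hy j
    rw [jacobian_congr hconst]
    ext j i
    simp [jacobian]
  rw [jacobian_eval_graph p hΦ] at hzero
  rw [jacobian_eval_graph F hΦ, ← det_fromBlocks_eq_mul_of_add_mul_eq_zero hzero]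
  congr 1
  ext (i | j) (i' | j') <;> rfl

theorem card_le_prod_totalDegree_mul_of_det_jacobian_ne_zero [CompleteSpace 𝕜]
    {U : Set (ι → 𝕜)} (hU : IsOpen U) (hΦ : ∀ x ∈ U, DifferentiableAt 𝕜 Φ x)
    (hp : ∀ x ∈ U, ∀ j, eval (Sum.elim x (Φ x)) (p j) = 0) {t : ι → 𝕜} {S : Finset (ι → 𝕜)}
    (hSU : ↑S ⊆ U) (hS : ∀ x ∈ S, ∀ i, eval (Sum.elim x (Φ x)) (F i) = t i)
    (hdet : ∀ x ∈ S, (jacobian (fun i y => eval (Sum.elim y (Φ y)) (F i)) x).det ≠ 0)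
    (hdetp : ∀ x ∈ S, (formalJacobian p (Sum.elim x (Φ x))).toCols₂.det ≠ 0) :
    S.card ≤ (∏ i, (F i).totalDegree) * ∏ j, (p j).totalDegree := by
  let graph : (ι → 𝕜) ↪ (ι ⊕ J → 𝕜) :=
    ⟨fun x => Sum.elim x (Φ x), fun x y h => funext fun i => congrFun h (Sum.inl i)⟩
  let system : ι ⊕ J → MvPolynomial (ι ⊕ J) 𝕜 := Sum.elim (fun i => F i - C (t i)) p
  have hsystem (z : ι ⊕ J → 𝕜) : formalJacobian system z = formalJacobian (Sum.elim F p) z := by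
    ext (i | j) c <;> simp [formalJacobian, system]
  calc S.card = (S.map graph).card := (S.card_map graph).symm
    _ ≤ ∏ c, (system c).totalDegree := by
      refine card_le_prod_totalDegree_of_det_formalJacobian_ne_zero system _ ?_ ?_
      · refine Finset.forall_mem_map.2 fun x hx c => ?_
        cases c with
        | inl i =>
          change eval (Sum.elim x (Φ x)) (F i - C (t i)) = 0
          rw [map_sub, eval_C, hS x hx i, sub_self]
        | inr j => exact hp x (hSU hx) j
      · refine Finset.forall_mem_map.2 fun x hx => ?_
        have hpx := mem_of_superset (hU.mem_nhds (hSU hx)) hp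
        rw [hsystem]
        exact (det_formalJacobian_elim_eq_mul (hΦ x (hSU hx)) hpx).trans_ne
          (mul_ne_zero (hdet x hx) (hdetp x hx))
    _ = (∏ i, (F i - C (t i)).totalDegree) * ∏ j, (p j).totalDegree := Fintype.prod_sum_type _
    _ ≤ (∏ i, (F i).totalDegree) * ∏ j, (p j).totalDegree := by
      gcongr with i
      exact totalDegree_sub_C_le _ _

end GraphJacobian

section SigmaLift

variable {ι κ R : Type*} [CommRing R] {M : κ → Type*}

/-- The polynomials `q i m` in the variables `ι ⊕ M i`, read in the joint set of variables. -/
def sigmaRename (q : ∀ i, M i → MvPolynomial (ι ⊕ M i) R) (a : Σ i, M i) :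
    MvPolynomial (ι ⊕ Σ i, M i) R :=
  rename (Sum.map id (Sigma.mk a.1)) (q a.1 a.2)

theorem eval_elim_rename_sigmaMk (x : ι → R) (y : ∀ i, M i → R) (i : κ)
    (q : MvPolynomial (ι ⊕ M i) R) :
    eval (Sum.elim x fun a : Σ i, M i => y a.1 a.2) (rename (Sum.map id (Sigma.mk i)) q) =
      eval (Sum.elim x (y i)) q := by
  rw [eval_rename, Sum.elim_comp_map]
  rfl

theorem toCols₂_formalJacobian_sigmaRename [DecidableEq κ]
    (p : ∀ i, M i → MvPolynomial (ι ⊕ M i) R) (x : ι → R) (y : ∀ i, M i → R) :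
    (formalJacobian (sigmaRename p) (Sum.elim x fun a : Σ i, M i => y a.1 a.2)).toCols₂ =
      Matrix.blockDiagonal' fun i => (formalJacobian (p i) (Sum.elim x (y i))).toCols₂ := by
  ext ⟨i, m⟩ ⟨i', m'⟩
  simp only [Matrix.toCols₂_apply, formalJacobian, Matrix.of_apply, sigmaRename]
  have hinj : Function.Injective (Sum.map id (Sigma.mk i) : ι ⊕ M i → ι ⊕ Σ i, M i) :=
    Sum.map_injective.2 ⟨Function.injective_id, sigma_mk_injective⟩
  by_cases h : i = i'
  · subst h
    have hvar : (Sum.inr ⟨i, m'⟩ : ι ⊕ Σ i, M i) = Sum.map id (Sigma.mk i) (Sum.inr m') := rfl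
    rw [Matrix.blockDiagonal'_apply_eq, hvar, pderiv_rename hinj, eval_elim_rename_sigmaMk]
    rfl
  · rw [Matrix.blockDiagonal'_apply_ne _ _ _ h, pderiv_eq_zero_of_notMem_vars, map_zero]
    classical
    intro hvars
    obtain ⟨c, -, hc⟩ := Finset.mem_image.1 (vars_rename _ _ hvars)
    rcases c with j | n
    · simp at hc
    · exact h (congrArg Sigma.fst (Sum.inr.inj hc))

theorem isUnit_det_blockDiagonal' [Fintype κ] [DecidableEq κ] [∀ i, Fintype (M i)]
    [∀ i, DecidableEq (M i)] {D : ∀ i, Matrix (M i) (M i) R} (hD : ∀ i, IsUnit (D i).det) :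
    IsUnit (Matrix.blockDiagonal' D).det := by
  have hunit : IsUnit D := Pi.isUnit_iff.2 fun i => (Matrix.isUnit_iff_isUnit_det _).2 (hD i)
  exact (Matrix.isUnit_iff_isUnit_det _).1 (hunit.map (Matrix.blockDiagonal'RingHom M R))

end SigmaLift

theorem encard_le_of_forall_finset_card_le {α : Type*} {s : Set α} {N : ℕ}
    (h : ∀ S : Finset α, ↑S ⊆ s → S.card ≤ N) : s.encard ≤ N := by
  by_contra! hlt
  obtain ⟨S, hSs, hS⟩ := exists_subset_encard_eq (Order.add_one_le_of_lt hlt)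
  have hfin : S.Finite := finite_of_encard_eq_coe (k := N + 1) (mod_cast hS)
  have hcard := h hfin.toFinset (by simpa)
  rw [hfin.encard_eq_coe_toFinset_card] at hS
  norm_cast at hS
  omega

section GraphAnalyticity

variable {𝕜 ι J : Type*} [NontriviallyNormedField 𝕜] [Fintype ι] [Fintype J] {U : Set (ι → 𝕜)}
  {Φ : (ι → 𝕜) → J → 𝕜}

theorem analyticOnNhd_eval_graph (hΦ : AnalyticOnNhd 𝕜 Φ U) (q : MvPolynomial (ι ⊕ J) 𝕜) :
    AnalyticOnNhd 𝕜 (fun x => eval (Sum.elim x (Φ x)) q) U := by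
  intro x hx
  have hgraph (c : ι ⊕ J) : AnalyticAt 𝕜 (fun y => Sum.elim y (Φ y) c) x := by
    cases c with
    | inl i => exact (ContinuousLinearMap.proj (R := 𝕜) (φ := fun _ => 𝕜) i).analyticAt x
    | inr j => exact analyticAt_pi_iff.1 (hΦ x hx) j
  simpa [coe_aeval_eq_eval] using AnalyticAt.aeval_mvPolynomial hgraph q

theorem analyticOnNhd_det_formalJacobian_toCols₂ [DecidableEq J] (hΦ : AnalyticOnNhd 𝕜 Φ U)
    (p : J → MvPolynomial (ι ⊕ J) 𝕜) :
    AnalyticOnNhd 𝕜 (fun x => (formalJacobian p (Sum.elim x (Φ x))).toCols₂.det) U := by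
  let D : Matrix J J (MvPolynomial (ι ⊕ J) 𝕜) := Matrix.of fun j j' => pderiv (Sum.inr j') (p j)
  have hD (x : ι → 𝕜) : eval (Sum.elim x (Φ x)) D.det =
      (formalJacobian p (Sum.elim x (Φ x))).toCols₂.det := by
    rw [RingHom.map_det]
    rfl
  simpa only [hD] using analyticOnNhd_eval_graph hΦ D.det

end GraphAnalyticity

section Nash

variable {d : ℕ} {U : Set (Fin d → ℝ)}

theorem IsNash.analyticOnNhd {f : (Fin d → ℝ) → ℝ} (hf : IsNash d U f) (hU : IsOpen U) :
    AnalyticOnNhd ℝ f U := by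
  obtain ⟨M, Φ, p, F, hlift, hF⟩ := hf
  exact (analyticOnNhd_eval_graph hlift.1 F).congr hU fun x hx => (hF x hx).symm

theorem IsAlgLift.ae_det_ne_zero {M : ℕ} {Φ : (Fin d → ℝ) → Fin M → ℝ}
    {p : Fin M → MvPolynomial (Fin d ⊕ Fin M) ℝ} (h : IsAlgLift d M U Φ p) (hU : IsOpen U) :
    ∀ᵐ x, x ∈ U → (formalJacobian p (Sum.elim x (Φ x))).toCols₂.det ≠ 0 :=
  ae_ne_zero_of_analyticOnNhd volume hU (analyticOnNhd_det_formalJacobian_toCols₂ h.1 p) h.2.2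

theorem exists_isNashRep_complexity_eq {f : (Fin d → ℝ) → ℝ} (hf : IsNash d U f)
    (hne : ∃ x ∈ U, f x ≠ 0) :
    ∃ (M : ℕ) (Φ : (Fin d → ℝ) → Fin M → ℝ) (p : Fin M → MvPolynomial (Fin d ⊕ Fin M) ℝ)
      (F : MvPolynomial (Fin d ⊕ Fin M) ℝ), IsNashRep d M U f Φ p F ∧
        complexity d U f = F.totalDegree * ∏ j, (p j).totalDegree := by
  obtain ⟨M, Φ, p, F, hrep⟩ := hf
  rw [complexity, if_neg (by simpa using hne)]
  exact Nat.sInf_mem (s := {c | ∃ M Φ p F, IsNashRep d M U f Φ p F ∧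
    c = F.totalDegree * ∏ j, (p j).totalDegree}) ⟨_, M, Φ, p, F, hrep, rfl⟩

variable {g : Fin d → (Fin d → ℝ) → ℝ} {M : Fin d → ℕ}
  {Φ : ∀ i, (Fin d → ℝ) → Fin (M i) → ℝ}
  {p : ∀ i, Fin (M i) → MvPolynomial (Fin d ⊕ Fin (M i)) ℝ}
  {F : ∀ i, MvPolynomial (Fin d ⊕ Fin (M i)) ℝ}

theorem encard_regular_fibre_le (hU : IsOpen U)
    (hrep : ∀ i, IsNashRep d (M i) U (g i) (Φ i) (p i) (F i)) (t : Fin d → ℝ) :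
    {x ∈ U | (∀ i, (formalJacobian (p i) (Sum.elim x (Φ i x))).toCols₂.det ≠ 0) ∧
        (fun i => g i x) = t ∧ (jacobian g x).det ≠ 0}.encard ≤
      ((∏ i, (F i).totalDegree * ∏ j, (p i j).totalDegree : ℕ) : ℕ∞) := by
  let Ψ (x : Fin d → ℝ) (a : Σ i, Fin (M i)) : ℝ := Φ a.1 x a.2
  let G (i : Fin d) : MvPolynomial (Fin d ⊕ Σ i, Fin (M i)) ℝ :=
    rename (Sum.map id (Sigma.mk i)) (F i)
  have hG (x : Fin d → ℝ) (hx : x ∈ U) (i : Fin d) : eval (Sum.elim x (Ψ x)) (G i) = g i x := by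
    rw [eval_elim_rename_sigmaMk x (fun i => Φ i x), (hrep i).2 x hx]
  refine encard_le_of_forall_finset_card_le fun S hS => ?_
  calc S.card ≤ (∏ i, (G i).totalDegree) * ∏ a, (sigmaRename p a).totalDegree := by
        refine card_le_prod_totalDegree_mul_of_det_jacobian_ne_zero (Φ := Ψ) hU ?_ ?_ (t := t)
          (fun x hx => (hS hx).1) ?_ ?_ ?_
        · exact fun x hx => differentiableAt_pi.2 fun a =>
            differentiableAt_pi.1 ((hrep a.1).1.1 x hx).differentiableAt a.2
        · intro x hx a
          rw [sigmaRename, eval_elim_rename_sigmaMk x fun i => Φ i x]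
          exact (hrep a.1).1.2.1 x hx a.2
        · exact fun x hx i => (hG x (hS hx).1 i).trans (congrFun (hS hx).2.2.1 i)
        · intro x hx
          have hgG (i : Fin d) : (fun y => eval (Sum.elim y (Ψ y)) (G i)) =ᶠ[𝓝 x] g i :=
            mem_of_superset (hU.mem_nhds (hS hx).1) fun y hy => hG y hy i
          rw [jacobian_congr hgG]
          exact (hS hx).2.2.2
        · intro x hx
          rw [toCols₂_formalJacobian_sigmaRename p x fun i => Φ i x]
          exact (isUnit_det_blockDiagonal' fun i => ((hS hx).2.1 i).isUnit).ne_zero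
    _ ≤ (∏ i, (F i).totalDegree) * ∏ i, ∏ j, (p i j).totalDegree := by
        rw [Fintype.prod_sigma]
        gcongr <;> exact totalDegree_rename_le _ _
    _ = ∏ i, (F i).totalDegree * ∏ j, (p i j).totalDegree := Finset.prod_mul_distrib.symm

theorem lintegral_abs_det_jacobian_le_of_isNashRep (hU : IsOpen U)
    (hrep : ∀ i, IsNashRep d (M i) U (g i) (Φ i) (p i) (F i))
    {A : Set (Fin d → ℝ)} (hA : MeasurableSet A) (hAU : A ⊆ U) :
    ∫⁻ x in A, ENNReal.ofReal |(jacobian g x).det| ≤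
      (∏ i, (F i).totalDegree * ∏ j, (p i j).totalDegree : ℕ) *
        volume ((fun x i => g i x) '' A) := by
  let R := {x | ∀ i, (formalJacobian (p i) (Sum.elim x (Φ i x))).toCols₂.det ≠ 0}
  have hg (x : Fin d → ℝ) (hx : x ∈ A) (i : Fin d) : DifferentiableAt ℝ (g i) x :=
    (IsNash.analyticOnNhd ⟨_, _, _, _, hrep i⟩ hU x (hAU hx)).differentiableAt
  have hR : ∀ᵐ x, x ∈ A → x ∈ R := by
    filter_upwards [ae_all_iff.2 fun i => (hrep i).1.ae_det_ne_zero hU] with x hx hxA i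
    exact hx i (hAU hxA)
  have hAR : A =ᵐ[volume] (A ∩ R : Set _) := by
    filter_upwards [hR] with x hx
    exact propext ⟨fun hxA => ⟨hxA, hx hxA⟩, And.left⟩
  obtain ⟨B, hBR, hB, hBAR⟩ := (hA.nullMeasurableSet.congr hAR).exists_measurable_subset_ae_eq
  have hBA : B ⊆ A := fun x hx => (hBR hx).1
  calc ∫⁻ x in A, ENNReal.ofReal |(jacobian g x).det|
      = ∫⁻ x in B, ENNReal.ofReal |(jacobian g x).det| :=
        setLIntegral_congr (hBAR.trans hAR.symm).symm
    _ = ∫⁻ x in B, ENNReal.ofReal |(fderiv ℝ (fun x i => g i x) x).det| :=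
        setLIntegral_congr_fun hB fun x hx => by
          rw [det_fderiv_pi (hg x (hBA hx))]
    _ ≤ (∏ i, (F i).totalDegree * ∏ j, (p i j).totalDegree : ℕ) *
          volume ((fun x i => g i x) '' B) := by
        refine lintegral_abs_det_fderiv_le_mul_addHaar_image_of_encard_regular_le volume hB
          (fun x hx => differentiableAt_pi.2 (hg x (hBA hx))) fun t => ?_
        refine (encard_le_encard fun x hx => ?_).trans (encard_regular_fibre_le hU hrep t)
        refine ⟨hAU (hBA hx.1), (hBR hx.1).2, hx.2.1, ?_⟩
        rw [← det_fderiv_pi (hg x (hBA hx.1))]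
        exact hx.2.2
    _ ≤ _ := by gcongr

end Nash

theorem volume_image_le_two_pow_of_abs_le_one {α ι : Type*} [Fintype ι] {g : α → ι → ℝ} {A : Set α}
    (hg : ∀ x ∈ A, ∀ i, |g x i| ≤ 1) : volume (g '' A) ≤ 2 ^ Fintype.card ι := by
  have hcube : g '' A ⊆ Icc (-1) 1 := image_subset_iff.2 fun x hx =>
    ⟨fun i => (abs_le.1 (hg x hx i)).1, fun i => (abs_le.1 (hg x hx i)).2⟩
  calc volume (g '' A) ≤ volume (Icc (-1) 1 : Set (ι → ℝ)) := measure_mono hcube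
    _ = 2 ^ Fintype.card ι := by
      rw [Real.volume_Icc_pi]
      norm_num

theorem statement14_general {d : ℕ} {U : Set (Fin d → ℝ)} (hU : IsOpen U)
    {g : Fin d → (Fin d → ℝ) → ℝ} (hg : ∀ i, IsNash d U (g i))
    {A : Set (Fin d → ℝ)} (hA : MeasurableSet A) (hAU : A ⊆ U) :
    ∫⁻ x in A, ENNReal.ofReal |(jacobian g x).det| ≤
      (∏ i, complexity d U (g i) : ℕ) * volume ((fun x i => g i x) '' A) := by
  by_cases hzero : ∃ i, ∀ x ∈ U, g i x = 0
  · obtain ⟨i, hi⟩ := hzero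
    have hdet : EqOn (fun x => ENNReal.ofReal |(jacobian g x).det|) 0 A := fun x hx => by
      have hlocal : g i =ᶠ[𝓝 x] 0 := mem_of_superset (hU.mem_nhds (hAU hx)) hi
      have hrow (j : Fin d) : jacobian g x i j = 0 := by
        simp [jacobian, hlocal.fderiv_eq]
      simp [Matrix.det_eq_zero_of_row_eq_zero i hrow]
    simp [setLIntegral_congr_fun hA hdet]
  · push Not at hzero
    choose M Φ p F hrep hcomplexity using fun i => exists_isNashRep_complexity_eq (hg i) (hzero i)
    simpa only [hcomplexity] using lintegral_abs_det_jacobian_le_of_isNashRep hU hrep hA hAU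

theorem statement14 (d : ℕ) (hd : 0 < d) (U : Set (Fin d → ℝ)) (hU : IsOpen U)
    (g : Fin d → (Fin d → ℝ) → ℝ) (hg : ∀ i, IsNash d U (g i))
    (A : Set (Fin d → ℝ)) (hA : MeasurableSet A) (hAU : A ⊆ U)
    (hb : ∀ x ∈ A, ∀ i, |g i x| ≤ 1) :
    (∫⁻ x in A, ENNReal.ofReal
        |Matrix.det (Matrix.of fun i j : Fin d => fderiv ℝ (g i) x (Pi.single j 1))|) ≤
      ENNReal.ofReal ((2 : ℝ) ^ d * ∏ i : Fin d, (complexity d U (g i) : ℝ)) := by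
  calc _ ≤ (∏ i, complexity d U (g i) : ℕ) * volume ((fun x i => g i x) '' A) :=
        statement14_general hU hg hA hAU
    _ ≤ (∏ i, complexity d U (g i) : ℕ) * 2 ^ d := by
        gcongr
        simpa using volume_image_le_two_pow_of_abs_le_one hb
    _ = _ := by
        rw [mul_comm, ENNReal.ofReal_mul (by positivity), ← Nat.cast_prod, ENNReal.ofReal_natCast,
          ENNReal.ofReal_pow zero_le_two, ENNReal.ofReal_ofNat]

end StatementFourteen
end
end

section
/- For every positive integer d₁, every positive integer s, and every ε ∈ (0,1), there exists a constant c > 0 such that every homogeneous real polynomial P of degree s in d₁ variables satisfies λ({ t ∈ 𝔹 : |P(t)| < c · sup_{t' ∈ 𝔹} |P(t')| }) ≤ ε · λ(𝔹), where 𝔹 is the closed Euclidean unit ball in ℝ^{d₁} and λ denotes Lebesgue measure. -/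
noncomputable section

open MeasureTheory
open scoped BigOperators ENNReal

/-!
The polynomials of degree at most `s`, restricted to a compact set `K`, form a finite-dimensional
subspace of `C(K, ℝ)`, whose sup norm is the supremum in the statement. By scaling one may assume
that this norm is `1`, so it suffices to consider a compact family of functions. The zero set of
a nonzero polynomial `f` is null, so `μ {|f| < δ} ≤ η` for small `δ`, and then all functions
uniformly close to `f` satisfy this with `δ / 2` in place of `δ`; compactness makes the constant
uniform over the family.
-/

open scoped Topology

section AnalyticZeros

variable {E F : Type*} [NormedAddCommGroup E] [NormedSpace ℝ E] [NormedAddCommGroup F]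
  [NormedSpace ℝ F] {f : E → F} {x₀ : E}

theorem ae_line_ne_zero_of_analyticOnNhd (hf : AnalyticOnNhd ℝ f Set.univ) (hx₀ : f x₀ ≠ 0)
    (v : E) : ∀ᵐ t : ℝ, f (x₀ + t • v) ≠ 0 := by
  have hline : AnalyticOnNhd ℝ (fun t : ℝ => f (x₀ + t • v)) Set.univ := fun t _ =>
    (hf _ trivial).comp (f := fun t : ℝ => x₀ + t • v) (by fun_prop)
  have hcod := hline.preimage_zero_mem_codiscrete (x := 0) (by simpa using hx₀)
  rw [← Measure.restrict_univ (μ := (volume : Measure ℝ))]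
  exact ae_restrict_le_codiscreteWithin MeasurableSet.univ hcod

variable [FiniteDimensional ℝ E] [MeasurableSpace E] [BorelSpace E]

theorem addHaar_zeros_eq_zero_of_analyticOnNhd (μ : Measure E) [μ.IsAddHaarMeasure]
    (hf : AnalyticOnNhd ℝ f Set.univ) (hx₀ : f x₀ ≠ 0) : μ {x | f x = 0} = 0 := by
  have hcont : Continuous f := continuousOn_univ.1 hf.continuousOn
  have hmeas : MeasurableSet {z : E × ℝ | f (x₀ + z.2 • z.1) = 0} :=
    (isClosed_eq (by fun_prop) continuous_const).measurableSet
  -- Fubini: almost every dilate of the zero set about `x₀` is null, and all dilates are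
  -- null together.
  have hdilates : ∀ᵐ t : ℝ, ∀ᵐ v ∂μ, f (x₀ + t • v) ≠ 0 :=
    Measure.ae_ae_comm hmeas.compl |>.1 <|
      .of_forall (ae_line_ne_zero_of_analyticOnNhd hf hx₀)
  obtain ⟨t, ht, ht0⟩ := (hdilates.and (Measure.ae_ne volume (0 : ℝ))).exists
  have hnull : μ ((t • ·) ⁻¹' ((x₀ + ·) ⁻¹' {x | f x = 0})) = 0 := by
    simpa [ae_iff] using ht
  rw [Measure.addHaar_preimage_smul μ ht0, measure_preimage_add] at hnull
  simpa [ht0] using hnull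

end AnalyticZeros

theorem volume_zeros_mvPolynomial_eq_zero {ι : Type*} [Fintype ι] {P : MvPolynomial ι ℝ}
    {x₀ : EuclideanSpace ℝ ι} (hx₀ : MvPolynomial.eval (fun i => x₀ i) P ≠ 0) :
    volume {x : EuclideanSpace ℝ ι | MvPolynomial.eval (fun i => x i) P = 0} = 0 :=
  have hP : AnalyticOnNhd ℝ (fun x : EuclideanSpace ℝ ι => MvPolynomial.eval (fun i => x i) P)
      Set.univ :=
    .eval_continuousLinearMap' (fun i => (EuclideanSpace.proj i : EuclideanSpace ℝ ι →L[ℝ] ℝ)) P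
  addHaar_zeros_eq_zero_of_analyticOnNhd volume hP hx₀

section Sublevel

variable {X F : Type*} [MeasurableSpace X] {μ : Measure X} [IsFiniteMeasure μ]
  [NormedAddCommGroup F] {η : ℝ≥0∞}

theorem exists_pos_measure_norm_lt_le {f : X → F} (hf : AEMeasurable (fun x => ‖f x‖) μ)
    (hzero : μ {x | f x = 0} = 0) (hη : 0 < η) : ∃ δ > 0, μ {x | ‖f x‖ < δ} ≤ η := by
  have hlim := tendsto_measure_biInter_gt (μ := μ) (s := fun δ : ℝ => {x | ‖f x‖ < δ}) (a := 0)
    (fun δ _ => nullMeasurableSet_lt hf aemeasurable_const)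
    (fun _ _ _ hle _ hx => lt_of_lt_of_le hx hle) ⟨1, one_pos, measure_ne_top _ _⟩
  have hinter : ⋂ δ > (0 : ℝ), {x | ‖f x‖ < δ} = {x | f x = 0} := by
    ext x
    simp only [Set.mem_iInter, Set.mem_ofPred_eq, ← norm_le_zero_iff (a := f x),
      le_iff_forall_pos_lt_add, zero_add, gt_iff_lt]
  rw [hinter, hzero] at hlim
  obtain ⟨δ, hδη, hδ⟩ := ((hlim.eventually_lt_const hη).and self_mem_nhdsWithin).exists
  exact ⟨δ, hδ, hδη.le⟩

variable [TopologicalSpace X] [CompactSpace X] [OpensMeasurableSpace X]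

-- For `c ≤ 0` the sublevel set is empty, so a full neighbourhood of `c = 0` may be used; this lets
-- compactness of a family of functions produce a uniform `c` by the tube lemma.
theorem eventually_nhds_measure_norm_lt_le {f : C(X, F)} (hzero : μ {x | f x = 0} = 0)
    (hη : 0 < η) : ∀ᶠ z : ℝ × C(X, F) in 𝓝 (0, f), μ {x | ‖z.2 x‖ < z.1} ≤ η := by
  obtain ⟨δ, hδ, hfδ⟩ :=
    exists_pos_measure_norm_lt_le f.continuous.norm.measurable.aemeasurable hzero hη
  filter_upwards [prod_mem_nhds (Iio_mem_nhds (half_pos hδ)) (Metric.ball_mem_nhds f (half_pos hδ))]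
    with ⟨c, g⟩ ⟨hc, hg⟩
  refine (measure_mono fun x (hx : ‖g x‖ < c) => ?_).trans hfδ
  have hdist : ‖f x - g x‖ < δ / 2 :=
    ((f - g).norm_coe_le_norm x).trans_lt (by rwa [← dist_eq_norm, dist_comm])
  calc
    ‖f x‖ ≤ ‖g x‖ + ‖f x - g x‖ := norm_le_insert' _ _
    _ < c + δ / 2 := add_lt_add hx hdist
    _ < δ / 2 + δ / 2 := by gcongr; exact hc
    _ = δ := add_halves δ

theorem exists_pos_forall_mem_measure_norm_lt_le {S : Set C(X, F)} (hS : IsCompact S)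
    (hzero : ∀ f ∈ S, μ {x | f x = 0} = 0) (hη : 0 < η) :
    ∃ c > 0, ∀ f ∈ S, μ {x | ‖f x‖ < c} ≤ η := by
  have hunif : ∀ᶠ c in 𝓝 (0 : ℝ), ∀ f ∈ S, μ {x | ‖f x‖ < c} ≤ η :=
    hS.eventually_forall_of_forall_eventually fun f hf =>
      eventually_nhds_measure_norm_lt_le (hzero f hf) hη
  have ⟨c, hc, hcpos⟩ := ((hunif.filter_mono nhdsWithin_le_nhds).and
    (self_mem_nhdsWithin (s := Set.Ioi 0))).exists
  exact ⟨c, hcpos, hc⟩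

theorem exists_pos_forall_submodule_measure_norm_lt_mul_le [NormedSpace ℝ F]
    (V : Submodule ℝ C(X, F)) [FiniteDimensional ℝ V]
    (hzero : ∀ f ∈ V, f ≠ 0 → μ {x | f x = 0} = 0) (hη : 0 < η) :
    ∃ c > 0, ∀ f ∈ V, μ {x | ‖f x‖ < c * ‖f‖} ≤ η := by
  have hsphere : IsCompact ((↑) '' Metric.sphere (0 : V) 1 : Set C(X, F)) :=
    (isCompact_sphere 0 1).image continuous_subtype_val
  obtain ⟨c, hc, hcη⟩ := exists_pos_forall_mem_measure_norm_lt_le (μ := μ) hsphere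
    (Set.forall_mem_image.2 fun f hf =>
      hzero f f.2 (by simpa using ne_zero_of_mem_unit_sphere ⟨f, hf⟩)) hη
  refine ⟨c, hc, fun f hfV => ?_⟩
  rcases eq_or_ne f 0 with rfl | hf
  · simp
  have hunit : ‖f‖⁻¹ • f ∈ ((↑) '' Metric.sphere (0 : V) 1 : Set C(X, F)) :=
    ⟨‖f‖⁻¹ • ⟨f, hfV⟩, by simp [norm_smul, hf], rfl⟩
  simpa [norm_smul, inv_mul_lt_iff₀' (norm_pos_iff.2 hf)] using hcη _ hunit

end Sublevel

section Polynomials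

theorem aeval_continuousMap_mvPolynomial_apply {σ R X : Type*} [CommSemiring R]
    [TopologicalSpace R] [IsTopologicalSemiring R] [TopologicalSpace X] (P : MvPolynomial σ R)
    (f : σ → C(X, R)) (x : X) :
    MvPolynomial.aeval f P x = MvPolynomial.eval (fun i => f i x) P :=
  MvPolynomial.comp_aeval_apply f (ContinuousMap.evalAlgHom R R x) P

variable {ι : Type*} [Fintype ι] {K : Set (EuclideanSpace ℝ ι)}

theorem exists_pos_volume_abs_eval_lt_mul_sSup_le (s : ℕ) (hK : IsCompact K) {η : ℝ≥0∞}
    (hη : 0 < η) :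
    ∃ c > 0, ∀ P : MvPolynomial ι ℝ, P.totalDegree ≤ s →
      volume {t | t ∈ K ∧ |MvPolynomial.eval (fun i => t i) P| <
          c * sSup ((fun t' => |MvPolynomial.eval (fun i => t' i) P|) '' K)} ≤ η := by
  have : CompactSpace K := isCompact_iff_compactSpace.1 hK
  let μ : Measure K := volume.comap Subtype.val
  have : IsFiniteMeasureOnCompacts μ :=
    .comap' volume continuous_subtype_val (.subtype_coe hK.measurableSet)
  let coord (i : ι) : C(K, ℝ) := ⟨fun t => t.1 i, by fun_prop⟩
  have haeval (P : MvPolynomial ι ℝ) (t : K) :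
      MvPolynomial.aeval coord P t = MvPolynomial.eval (fun i => t.1 i) P :=
    aeval_continuousMap_mvPolynomial_apply P coord t
  have hμ (A : Set K) : μ A = volume ((↑) '' A : Set (EuclideanSpace ℝ ι)) :=
    comap_subtype_coe_apply hK.measurableSet volume A
  let V : Submodule ℝ C(K, ℝ) :=
    (MvPolynomial.restrictTotalDegree ι ℝ s).map (MvPolynomial.aeval coord).toLinearMap
  have hzero : ∀ f ∈ V, f ≠ 0 → μ {t | f t = 0} = 0 := by
    rintro _ ⟨P, -, rfl⟩ hP
    obtain ⟨t₀, ht₀⟩ := DFunLike.ne_iff.1 hP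
    rw [hμ]
    refine measure_mono_null ?_ (volume_zeros_mvPolynomial_eq_zero ((haeval P t₀).symm ▸ ht₀))
    rintro _ ⟨t, ht, rfl⟩
    exact (haeval P t).symm.trans ht
  obtain ⟨c, hc, hcη⟩ := exists_pos_forall_submodule_measure_norm_lt_mul_le V hzero hη
  refine ⟨c, hc, fun P hP => ?_⟩
  have hnorm : ‖MvPolynomial.aeval coord P‖ =
      sSup ((fun t => |MvPolynomial.eval (fun i => t i) P|) '' K) := by
    simp only [ContinuousMap.norm_eq_iSup_norm, haeval, Real.norm_eq_abs, sSup_image']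
  have hPη := hcη _ (Submodule.mem_map_of_mem ((MvPolynomial.mem_restrictTotalDegree _ _ _).2 hP))
  rw [hμ] at hPη
  refine (measure_mono ?_).trans hPη
  rintro t ⟨htK, ht⟩
  refine ⟨⟨t, htK⟩, ?_, rfl⟩
  simpa [haeval, hnorm] using ht

theorem statement15_general (s : ℕ) (hK : IsCompact K) {ε : ℝ} (hε : 0 < ε) :
    ∃ c > 0, ∀ P : MvPolynomial ι ℝ, P.totalDegree ≤ s →
      volume {t | t ∈ K ∧ |MvPolynomial.eval (fun i => t i) P| <
          c * sSup ((fun t' => |MvPolynomial.eval (fun i => t' i) P|) '' K)} ≤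
        ENNReal.ofReal ε * volume K := by
  rcases eq_or_ne (volume K) 0 with hK0 | hK0
  · exact ⟨1, one_pos, fun P _ => (measure_mono_null (fun t ht => ht.1) hK0).trans_le zero_le⟩
  · exact exists_pos_volume_abs_eval_lt_mul_sSup_le s hK
      (ENNReal.mul_pos (ENNReal.ofReal_pos.2 hε).ne' hK0)

end Polynomials

theorem statement15 (d₁ : ℕ) (hd₁ : 0 < d₁) (s : ℕ) (hs : 0 < s)
    (ε : ℝ) (hε0 : 0 < ε) (hε1 : ε < 1) :
    ∃ c : ℝ, 0 < c ∧
      ∀ P : MvPolynomial (Fin d₁) ℝ, P.IsHomogeneous s →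
        volume { t : EuclideanSpace ℝ (Fin d₁) |
            t ∈ Metric.closedBall (0 : EuclideanSpace ℝ (Fin d₁)) 1 ∧
            |MvPolynomial.eval (fun i => t i) P| <
              c * sSup ((fun t' : EuclideanSpace ℝ (Fin d₁) =>
                |MvPolynomial.eval (fun i => t' i) P|) ''
                  Metric.closedBall (0 : EuclideanSpace ℝ (Fin d₁)) 1) } ≤
          ENNReal.ofReal ε *
            volume (Metric.closedBall (0 : EuclideanSpace ℝ (Fin d₁)) 1) := by
  obtain ⟨c, hc, h⟩ := statement15_general s
    (isCompact_closedBall (0 : EuclideanSpace ℝ (Fin d₁)) 1) hε0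
  exact ⟨c, hc, fun P hP => h P hP.totalDegree_le⟩
end
end

section
/- Let n, k, d₁ be positive integers with n > k and set n₁ := d₁ + k. Let U ⊆ ℝ^n × ℝ^{d₁} be open, let φ : U → ℝ^k be smooth, suppose the Jacobian matrix D_xφ (derivatives in the x variables) has rank k at a point (x*, t*) ∈ U, and put γ_t(x) := (t, φ(x,t)) ∈ ℝ^{n₁}. Then there is an open neighborhood V ⊆ U of (x*, t*) with the following property: for every p ∈ [1, ∞] and every continuous η : ℝ^n × ℝ^{n₁} → ℝ such that the closure of {(x,t) ∈ U : η(x, γ_t(x)) ≠ 0} is compact and contained in V, there is a finite constant C such that ‖ ∫_{ℝ^{d₁}} f(γ_t(·)) |η(·, γ_t(·))| dt ‖_{L^p(ℝ^n)} ≤ C ‖f‖_{L^p(ℝ^{n₁})} for every nonnegative Borel measurable f on ℝ^{n₁}. -/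
noncomputable section

open MeasureTheory
open scoped BigOperators ENNReal NNReal

namespace Statement16

abbrev E (n : ℕ) : Type := EuclideanSpace ℝ (Fin n)

/-! Since `D_xφ` is onto at `(x*, t*)`, the map `(x, t) ↦ (t, φ(x, t))` is a submersion there. A
submersion becomes a local diffeomorphism once it is paired with a coordinate along the kernel of
its derivative, and near the base point that coordinate is bounded; hence the submersion pushes
Haar measure on a small neighbourhood forward to at most a constant multiple of Haar measure on the
target. Composition with it is therefore bounded in `L^p` on the support of the amplitude, and
integrating in `t` over the bounded set of times met by this support costs only Hölder's inequality
in the fibres. -/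

open Function Set Topology

section LinearAlgebra

lemma surjective_snd_prod {R X T Y : Type*} [Ring R] [AddCommGroup X] [Module R X]
    [AddCommGroup T] [Module R T] [AddCommGroup Y] [Module R Y] {D : X × T →ₗ[R] Y}
    (hD : Surjective (D ∘ₗ LinearMap.inl R X T)) : Surjective ((LinearMap.snd R X T).prod D) := by
  rintro ⟨t, y⟩
  obtain ⟨x, hx⟩ := hD (y - D (0, t))
  replace hx : D (x, 0) = y - D (0, t) := hx
  refine ⟨(x, t), Prod.ext rfl ?_⟩
  calc D (x, t) = D (x, 0) + D (0, t) := by rw [← map_add, Prod.mk_add_mk, add_zero, zero_add]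
    _ = y := by rw [hx, sub_add_cancel]

lemma surjective_of_rank_eq {K V W : Type*} [DivisionRing K] [AddCommGroup V] [Module K V]
    [AddCommGroup W] [Module K W] [FiniteDimensional K W] {f : V →ₗ[K] W}
    (hf : f.rank = Module.rank K W) : Surjective f :=
  LinearMap.range_eq_top.1 (Submodule.eq_top_of_finrank_eq (congrArg Cardinal.toNat hf))

end LinearAlgebra

section FiberIntegration

variable {X T Z ε : Type*} [MeasurableSpace X] [MeasurableSpace T] [MeasurableSpace Z]
  [TopologicalSpace ε] {μ : Measure X} {τ : Measure T} {ζ : Measure Z} {p : ℝ≥0∞}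

lemma eLpNorm_eLpNorm_fiber_le [ContinuousENorm ε] [SFinite τ] {g : X × T → ε}
    (hg : AEStronglyMeasurable g (μ.prod τ)) :
    eLpNorm (fun x => eLpNorm (fun t => g (x, t)) p τ) p μ ≤ eLpNorm g p (μ.prod τ) := by
  rcases eq_or_ne p 0 with rfl | hp0
  · simp
  rcases eq_or_ne p ∞ with rfl | hp
  · simp only [eLpNorm_exponent_top]
    refine essSup_le_of_ae_le _ ?_
    filter_upwards [Measure.ae_ae_of_ae_prod (enorm_ae_le_eLpNormEssSup g (μ.prod τ))] with x hx
    exact essSup_le_of_ae_le _ hx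
  · have hp' : 0 < p.toReal := ENNReal.toReal_pos hp0 hp
    simp only [eLpNorm_eq_lintegral_rpow_enorm_toReal hp0 hp, enorm_eq_self, one_div,
      ENNReal.rpow_inv_rpow hp'.ne', lintegral_prod _ (hg.enorm.pow_const p.toReal), le_refl]

lemma one_sub_toReal_one_div_nonneg (hp : 1 ≤ p) : 0 ≤ 1 - (1 / p).toReal := by
  simpa using ENNReal.toReal_mono ENNReal.one_ne_top (ENNReal.inv_le_one.2 hp)

lemma eLpNorm_lintegral_fiber_le [IsFiniteMeasure τ] {g : X × T → ℝ≥0∞}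
    (hg : AEMeasurable g (μ.prod τ)) (hp : 1 ≤ p) :
    eLpNorm (fun x => ∫⁻ t, g (x, t) ∂τ) p μ ≤
      τ univ ^ (1 - (1 / p).toReal) * eLpNorm g p (μ.prod τ) := by
  have hexp := one_sub_toReal_one_div_nonneg hp
  have holder : ∀ᵐ x ∂μ, ∫⁻ t, g (x, t) ∂τ ≤
      τ univ ^ (1 - (1 / p).toReal) * eLpNorm (fun t => g (x, t)) p τ := by
    filter_upwards [hg.aestronglyMeasurable.prodMk_left] with x hx
    simpa [eLpNorm_one_eq_lintegral_enorm, mul_comm] using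
      eLpNorm_le_eLpNorm_mul_rpow_measure_univ hp hx
  lift τ univ ^ (1 - (1 / p).toReal) to ℝ≥0 using by finiteness with c
  calc eLpNorm (fun x => ∫⁻ t, g (x, t) ∂τ) p μ
      ≤ c * eLpNorm (fun x => eLpNorm (fun t => g (x, t)) p τ) p μ :=
        eLpNorm_le_mul_eLpNorm_of_ae_le_mul' (by simpa using holder) p
    _ ≤ c * eLpNorm g p (μ.prod τ) := by grw [eLpNorm_eLpNorm_fiber_le hg.aestronglyMeasurable]

lemma eLpNorm_comp_le_of_map_le {γ : X → Z} {C : ℝ≥0∞} (hγ : AEMeasurable γ μ)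
    (hmap : μ.map γ ≤ C • ζ) {f : Z → ℝ≥0∞} (hf : AEMeasurable f ζ) :
    eLpNorm (f ∘ γ) p μ ≤ C ^ (1 / p).toReal * eLpNorm f p ζ := by
  have hac : μ.map γ ≪ ζ := Measure.absolutelyContinuous_of_le_smul hmap
  rw [← eLpNorm_map_measure (hf.mono_ac hac).aestronglyMeasurable hγ]
  exact eLpNorm_le_of_measure_le_smul hmap

lemma eLpNorm_lintegral_comp_mul_le [SFinite τ] {K : Set (X × T)} {S : Set T}
    (hK : MeasurableSet K) (hS : MeasurableSet S) (hτS : τ S ≠ ∞) (hKS : K ⊆ univ ×ˢ S)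
    {γ : X × T → Z} {C : ℝ≥0∞} (hγ : AEMeasurable γ ((μ.prod τ).restrict K))
    (hmap : ((μ.prod τ).restrict K).map γ ≤ C • ζ) {w : X × T → ℝ≥0∞} {M : ℝ≥0}
    (hw : w ≤ K.indicator fun _ => (M : ℝ≥0∞)) (hp : 1 ≤ p) {f : Z → ℝ≥0∞}
    (hf : AEMeasurable f ζ) :
    eLpNorm (fun x => ∫⁻ t, f (γ (x, t)) * w (x, t) ∂τ) p μ ≤
      M * τ S ^ (1 - (1 / p).toReal) * C ^ (1 / p).toReal * eLpNorm f p ζ := by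
  have : IsFiniteMeasure (τ.restrict S) := isFiniteMeasure_restrict.2 hτS
  have hac : ((μ.prod τ).restrict K).map γ ≪ ζ := Measure.absolutelyContinuous_of_le_smul hmap
  set g : X × T → ℝ≥0∞ := K.indicator (f ∘ γ) with hg_def
  have hg : AEMeasurable g (μ.prod τ) :=
    (aemeasurable_indicator_iff hK).2 ((hf.mono_ac hac).comp_aemeasurable hγ)
  have hτ : μ.prod (τ.restrict S) ≤ μ.prod τ := Measure.prod_mono le_rfl Measure.restrict_le_self
  have hfiber (x : X) : ∫⁻ t, f (γ (x, t)) * w (x, t) ∂τ ≤ M * ∫⁻ t in S, g (x, t) ∂τ := by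
    rw [← lintegral_const_mul' _ _ ENNReal.coe_ne_top, ← lintegral_indicator hS]
    refine lintegral_mono fun t => ?_
    by_cases hxt : (x, t) ∈ K
    · have hwM : w (x, t) ≤ M := by simpa [hxt] using hw (x, t)
      simpa [g, hxt, (hKS hxt).2, mul_comm] using mul_le_mul_right hwM (f (γ (x, t)))
    · have hw0 : w (x, t) = 0 := by simpa [hxt] using hw (x, t)
      simp [hw0]
  calc eLpNorm (fun x => ∫⁻ t, f (γ (x, t)) * w (x, t) ∂τ) p μ
      ≤ M * eLpNorm (fun x => ∫⁻ t in S, g (x, t) ∂τ) p μ :=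
        eLpNorm_le_mul_eLpNorm_of_ae_le_mul' (.of_forall hfiber) p
    _ ≤ M * (τ S ^ (1 - (1 / p).toReal) * eLpNorm g p (μ.prod τ)) := by
        grw [eLpNorm_lintegral_fiber_le (hg.mono_measure hτ) hp, Measure.restrict_apply_univ,
          eLpNorm_mono_measure g hτ]
    _ ≤ M * (τ S ^ (1 - (1 / p).toReal) * (C ^ (1 / p).toReal * eLpNorm f p ζ)) := by
        grw [hg_def, eLpNorm_indicator_eq_eLpNorm_restrict hK, eLpNorm_comp_le_of_map_le hγ hmap hf]
    _ = M * τ S ^ (1 - (1 / p).toReal) * C ^ (1 / p).toReal * eLpNorm f p ζ := by ring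

end FiberIntegration

section Submersion

variable {M N : Type*} [NormedAddCommGroup M] [NormedSpace ℝ M] [FiniteDimensional ℝ M]
  [MeasurableSpace M] [BorelSpace M] [NormedAddCommGroup N] [NormedSpace ℝ N]
  [FiniteDimensional ℝ N] [MeasurableSpace N] [BorelSpace N]
  (μ : Measure M) [μ.IsAddHaarMeasure] (ν : Measure N) [ν.IsAddHaarMeasure] {a : M} {f : M → N}

lemma exists_nhds_measure_le_measure_image {f' : M ≃L[ℝ] N}
    (hf : HasStrictFDerivAt f (f' : M →L[ℝ] N) a) :
    ∃ W ∈ 𝓝 a, ∃ C : ℝ≥0, ∀ s ⊆ W, μ s ≤ C * ν (f '' s) := by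
  have hid : HasStrictFDerivAt (f'.symm ∘ f) (ContinuousLinearMap.id ℝ M) a := by
    rw [← f'.coe_symm_comp_coe]
    exact f'.symm.hasStrictFDerivAt.comp a hf
  have hdet : ((2⁻¹ : ℝ≥0) : ℝ≥0∞) < ENNReal.ofReal |(ContinuousLinearMap.id ℝ M).det| := by
    simp [ContinuousLinearMap.det]
  obtain ⟨δ, hδ, hδ0⟩ :=
    ((mul_le_addHaar_image_of_lt_det μ _ hdet).and self_mem_nhdsWithin).exists
  obtain ⟨W, hW, happrox⟩ := hid.approximates_deriv_on_nhds (.inr hδ0)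
  have : (μ.map f').IsAddHaarMeasure := f'.isAddHaarMeasure_map μ
  have hmap := Measure.isAddLeftInvariant_eq_smul (μ.map f') ν
  set c := (μ.map f').addHaarScalarFactor ν
  refine ⟨W, hW, 2 * c, fun s hs => ?_⟩
  calc μ s ≤ 2 * μ ((f'.symm ∘ f) '' s) := by
        simpa [ENNReal.inv_mul_le_iff] using hδ s _ (happrox.mono_set hs)
    _ = 2 * μ.map f' (f '' s) := by
        rw [image_comp, f'.image_symm_eq_preimage]
        exact congrArg (2 * ·) (f'.toHomeomorph.toMeasurableEquiv.map_apply _).symm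
    _ = (2 * c : ℝ≥0) * ν (f '' s) := by
        rw [hmap, Measure.smul_apply, ENNReal.smul_def, smul_eq_mul, ENNReal.coe_mul, mul_assoc,
          ENNReal.coe_ofNat]

lemma exists_nhds_measure_inter_preimage_le {f' : M →L[ℝ] N} (hf : HasStrictFDerivAt f f' a)
    (hf' : Surjective f') :
    ∃ W ∈ 𝓝 a, ∃ C : ℝ≥0, ∀ B : Set N, μ (W ∩ f ⁻¹' B) ≤ C * ν B := by
  have : CompleteSpace M := FiniteDimensional.complete ℝ M
  have : CompleteSpace N := FiniteDimensional.complete ℝ N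
  let Φ := hf.implicitFunctionDataOfComplemented f f' (LinearMap.range_eq_top.2 hf')
    f'.ker_closedComplemented_of_finiteDimensional_range
  let κ : Measure f'.ker := Measure.addHaar
  obtain ⟨W, hW, C, hC⟩ := exists_nhds_measure_le_measure_image μ (ν.prod κ) Φ.hasStrictFDerivAt
  let R : Set f'.ker := Metric.ball (Φ.rightFun a) 1
  have hR : Φ.rightFun ⁻¹' R ∈ 𝓝 a :=
    Φ.hasStrictFDerivAt_rightFun.continuousAt (Metric.ball_mem_nhds _ one_pos)
  refine ⟨W ∩ Φ.rightFun ⁻¹' R, Filter.inter_mem hW hR, C * (κ R).toNNReal, fun B => ?_⟩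
  have himage : Φ.prodFun '' (W ∩ Φ.rightFun ⁻¹' R ∩ f ⁻¹' B) ⊆ B ×ˢ R := by
    rintro _ ⟨x, ⟨⟨-, hxR⟩, hxB⟩, rfl⟩
    exact ⟨hxB, hxR⟩
  calc μ (W ∩ Φ.rightFun ⁻¹' R ∩ f ⁻¹' B)
      ≤ C * ν.prod κ (Φ.prodFun '' (W ∩ Φ.rightFun ⁻¹' R ∩ f ⁻¹' B)) :=
        hC _ fun x hx => hx.1.1
    _ ≤ C * ν.prod κ (B ×ˢ R) := by gcongr
    _ = _ := by
        rw [Measure.prod_prod, ENNReal.coe_mul, ENNReal.coe_toNNReal measure_ball_lt_top.ne]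
        ring

lemma exists_isOpen_map_restrict_le {f' : M →L[ℝ] N} (hf : HasStrictFDerivAt f f' a)
    (hf' : Surjective f') :
    ∃ W : Set M, IsOpen W ∧ a ∈ W ∧ ContinuousOn f W ∧
      ∃ C : ℝ≥0, (μ.restrict W).map f ≤ (C : ℝ≥0∞) • ν := by
  obtain ⟨W, hW, C, hC⟩ := exists_nhds_measure_inter_preimage_le μ ν hf hf'
  obtain ⟨_, W', hW', hlip⟩ := hf.exists_lipschitzOnWith
  have hcont : ContinuousOn f (interior (W ∩ W')) :=
    hlip.continuousOn.mono (interior_subset.trans inter_subset_right)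
  refine ⟨interior (W ∩ W'), isOpen_interior,
    mem_interior_iff_mem_nhds.2 (Filter.inter_mem hW hW'), hcont, C, ?_⟩
  refine Measure.le_iff.2 fun B hB => ?_
  have hfm := hcont.aemeasurable (μ := μ) isOpen_interior.measurableSet
  rw [Measure.map_apply_of_aemeasurable hfm hB,
    Measure.restrict_apply' isOpen_interior.measurableSet, inter_comm]
  refine (measure_mono ?_).trans (hC B)
  gcongr
  exact interior_subset.trans inter_subset_left

end Submersion

lemma exists_enorm_le_indicator_tsupport {X F : Type*} [TopologicalSpace X] [NormedAddCommGroup F]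
    {a : X → F} (ha : Continuous a) (hac : HasCompactSupport a) :
    ∃ M : ℝ≥0, (fun x => ‖a x‖ₑ) ≤ (tsupport a).indicator fun _ => (M : ℝ≥0∞) := by
  obtain ⟨M, hM⟩ := ha.bounded_above_of_compact_support hac
  refine ⟨M.toNNReal, le_indicator (fun x _ => ?_) fun x hx => ?_⟩
  · exact (ofReal_norm (a x)).symm.trans_le (ENNReal.ofReal_le_ofReal (hM x))
  · simp [image_eq_zero_of_notMem_tsupport hx]

section Averaging

variable {X T Y Z : Type*} [NormedAddCommGroup X] [NormedSpace ℝ X] [FiniteDimensional ℝ X]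
  [MeasurableSpace X] [BorelSpace X] [NormedAddCommGroup T] [NormedSpace ℝ T]
  [FiniteDimensional ℝ T] [MeasurableSpace T] [BorelSpace T] [NormedAddCommGroup Y]
  [NormedSpace ℝ Y] [FiniteDimensional ℝ Y] [MeasurableSpace Y] [BorelSpace Y]
  [NormedAddCommGroup Z] [NormedSpace ℝ Z] [FiniteDimensional ℝ Z] [MeasurableSpace Z]
  [BorelSpace Z]
  (μ : Measure X) [μ.IsAddHaarMeasure] (τ : Measure T) [τ.IsAddHaarMeasure]

lemma exists_isOpen_eLpNorm_lintegral_comp_mul_le (ζ : Measure Z) [ζ.IsAddHaarMeasure]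
    {γ : X × T → Z} {γ' : X × T →L[ℝ] Z} {q₀ : X × T} (hγ : HasStrictFDerivAt γ γ' q₀)
    (hγ' : Surjective γ') :
    ∃ W : Set (X × T), IsOpen W ∧ q₀ ∈ W ∧
      ∀ p : ℝ≥0∞, 1 ≤ p → ∀ a : X × T → ℝ, Continuous a → HasCompactSupport a → tsupport a ⊆ W →
        ∃ C : ℝ≥0, ∀ f : Z → ℝ≥0∞, AEMeasurable f ζ →
          eLpNorm (fun x => ∫⁻ t, f (γ (x, t)) * ‖a (x, t)‖ₑ ∂τ) p μ ≤ C * eLpNorm f p ζ := by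
  obtain ⟨W, hWo, hW, hcont, C, hmap⟩ := exists_isOpen_map_restrict_le (μ.prod τ) ζ hγ hγ'
  refine ⟨W, hWo, hW, fun p hp a ha hac haW => ?_⟩
  have hK : MeasurableSet (tsupport a) := (isClosed_tsupport a).measurableSet
  have hS : IsCompact (Prod.snd '' tsupport a) := hac.isCompact.image continuous_snd
  have hγW := hcont.aemeasurable (μ := μ.prod τ) hWo.measurableSet
  have hle := Measure.restrict_mono_set (μ.prod τ) haW
  obtain ⟨M, hM⟩ := exists_enorm_le_indicator_tsupport ha hac
  have hexp := one_sub_toReal_one_div_nonneg hp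
  have hS_top : τ (Prod.snd '' tsupport a) ≠ ∞ := hS.measure_ne_top
  lift τ (Prod.snd '' tsupport a) ^ (1 - (1 / p).toReal) * C ^ (1 / p).toReal to ℝ≥0
    using by finiteness with c hc
  refine ⟨M * c, fun f hf => ?_⟩
  rw [ENNReal.coe_mul, hc, ← mul_assoc]
  exact eLpNorm_lintegral_comp_mul_le hK hS.measurableSet hS_top
    (fun q hq => ⟨mem_univ _, mem_image_of_mem _ hq⟩) (hγW.mono_measure hle)
    ((Measure.map_mono_of_aemeasurable hle hγW).trans hmap) hM hp hf

theorem statement16_general (ν : Measure Y) [ν.IsAddHaarMeasure] {U : Set (X × T)}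
    (hU : IsOpen U) {φ : X × T → Y} (hφ : ContDiffOn ℝ 1 φ U) {x₀ : X} {t₀ : T}
    (hmem : (x₀, t₀) ∈ U) (hsurj : Surjective (fderiv ℝ (fun x => φ (x, t₀)) x₀)) :
    ∃ V : Set (X × T), IsOpen V ∧ (x₀, t₀) ∈ V ∧ V ⊆ U ∧
      ∀ p : ℝ≥0∞, 1 ≤ p → ∀ η : X × (T × Y) → ℝ, Continuous η →
        HasCompactSupport (fun q : X × T => η (q.1, (q.2, φ q))) →
        tsupport (fun q : X × T => η (q.1, (q.2, φ q))) ⊆ V →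
        ∃ C : ℝ≥0, ∀ f : T × Y → ℝ≥0∞, AEMeasurable f (τ.prod ν) →
          eLpNorm (fun x => ∫⁻ t, f (t, φ (x, t)) * ‖η (x, (t, φ (x, t)))‖ₑ ∂τ) p μ ≤
            C * eLpNorm f p (τ.prod ν) := by
  have hφ' : HasStrictFDerivAt φ (fderiv ℝ φ (x₀, t₀)) (x₀, t₀) :=
    (hφ.contDiffAt (hU.mem_nhds hmem)).hasStrictFDerivAt one_ne_zero
  have hpartial : HasFDerivAt (fun x => φ (x, t₀))
      (fderiv ℝ φ (x₀, t₀) ∘L ContinuousLinearMap.inl ℝ X T) x₀ :=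
    hφ'.hasFDerivAt.comp (f := fun x => (x, t₀)) x₀ (hasFDerivAt_prodMk_left x₀ t₀)
  have hγ : HasStrictFDerivAt (fun q : X × T => (q.2, φ q))
      ((ContinuousLinearMap.snd ℝ X T).prod (fderiv ℝ φ (x₀, t₀))) (x₀, t₀) :=
    hasStrictFDerivAt_snd.prodMk hφ'
  rw [hpartial.fderiv] at hsurj
  have hγ' : Surjective ((ContinuousLinearMap.snd ℝ X T).prod (fderiv ℝ φ (x₀, t₀))) :=
    surjective_snd_prod (D := (fderiv ℝ φ (x₀, t₀)).toLinearMap) hsurj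
  obtain ⟨W, hWo, hW, hbound⟩ :=
    exists_isOpen_eLpNorm_lintegral_comp_mul_le μ τ (τ.prod ν) hγ hγ'
  refine ⟨W ∩ U, hWo.inter hU, ⟨hW, hmem⟩, inter_subset_right, fun p hp η hη hsupp hsub => ?_⟩
  have hcont : Continuous fun q : X × T => η (q.1, (q.2, φ q)) := by
    refine continuous_of_tsupport fun q hq => ?_
    have : ContinuousAt φ q := hφ.continuousOn.continuousAt (hU.mem_nhds (hsub hq).2)
    fun_prop
  obtain ⟨C, hC⟩ := hbound p hp _ hcont hsupp (hsub.trans inter_subset_left)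
  exact ⟨C, fun f hf => hC f hf⟩

end Averaging

lemma eLpNorm_integral_mul_abs_le {X T : Type*} [MeasurableSpace X] [MeasurableSpace T]
    (μ : Measure X) (τ : Measure T) (g w : X → T → ℝ) (p : ℝ≥0∞) :
    eLpNorm (fun x => ∫ t, g x t * |w x t| ∂τ) p μ ≤
      eLpNorm (fun x => ∫⁻ t, ‖g x t‖ₑ * ‖w x t‖ₑ ∂τ) p μ :=
  eLpNorm_mono_enorm fun x => by
    simpa [enorm_mul] using enorm_integral_le_lintegral_enorm fun t => g x t * |w x t|

theorem statement16
    (n k d₁ : ℕ) (hk : 0 < k) (hd₁ : 0 < d₁) (hkn : k < n)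
    (U : Set (E n × E d₁)) (hU : IsOpen U)
    (φ : E n × E d₁ → E k) (hφ : ContDiffOn ℝ (⊤ : ℕ∞) φ U)
    (xs : E n) (ts : E d₁) (hmem : (xs, ts) ∈ U)
    (hrank : LinearMap.rank (fderiv ℝ (fun x : E n => φ (x, ts)) xs).toLinearMap
      = (k : Cardinal)) :
    ∃ V : Set (E n × E d₁), IsOpen V ∧ (xs, ts) ∈ V ∧ V ⊆ U ∧
      ∀ p : ℝ≥0∞, 1 ≤ p →
        ∀ η : E n × (E d₁ × E k) → ℝ, Continuous η →
          HasCompactSupport (fun q : E n × E d₁ => η (q.1, (q.2, φ q))) →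
          tsupport (fun q : E n × E d₁ => η (q.1, (q.2, φ q))) ⊆ V →
          ∃ C : ℝ≥0, ∀ f : E d₁ × E k → ℝ, 0 ≤ f → Measurable f →
            eLpNorm (fun x : E n =>
                ∫ t : E d₁, f (t, φ (x, t)) * |η (x, (t, φ (x, t)))|) p volume ≤
              C * eLpNorm f p volume := by
  have hsurj : Surjective (fderiv ℝ (fun x : E n => φ (x, ts)) xs) :=
    surjective_of_rank_eq (hrank.trans (by simp [← Module.finrank_eq_rank]))
  obtain ⟨V, hVo, hV, hVU, hbound⟩ :=
    statement16_general volume volume volume hU (hφ.of_le (mod_cast le_top)) hmem hsurj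
  refine ⟨V, hVo, hV, hVU, fun p hp η hη hsupp hsub => ?_⟩
  obtain ⟨C, hC⟩ := hbound p hp η hη hsupp hsub
  refine ⟨C, fun f _ hf => ?_⟩
  have hbound_f := hC _ hf.enorm.aemeasurable
  rw [eLpNorm_enorm] at hbound_f
  exact (eLpNorm_integral_mul_abs_le ..).trans hbound_f

end Statement16
end
end

section
/- Let G, H, K be Hilbert spaces over ℝ or ℂ, and let T : H → K and R : G → H be bounded linear operators. Then for every integer N ≥ 1, ‖R*T*TR‖ ≤ ‖R*R‖^{1 − 1/N} · ‖R*(T*T)^N R‖^{1/N}, and consequently ‖TR‖ ≤ ‖R‖^{1 − 1/N} · ‖R*(T*T)^N R‖^{1/(2N)}. -/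
noncomputable section

open ContinuousLinearMap

/-!
For a positive operator `A`, the form `⟪A x, y⟫` satisfies the Cauchy–Schwarz inequality. Applied to
the powers of `A`, it shows that the moments `a n = ‖R* A ^ n R‖` satisfy
`a (n + 1) ^ 2 ≤ a n * a (n + 2)`. Hence the ratios `a (n + 1) / a n` increase, and multiplying the
first `N` of them gives `(a 1 / a 0) ^ N ≤ a N / a 0`. The theorem is the case `A = T* T`.
-/

section LogConvexSequence

variable {S : Type*} [CommSemiring S] [LinearOrder S] [IsStrictOrderedRing S] {a : ℕ → S}

lemma mul_le_mul_succ_of_sq_le (ha : ∀ n, 0 ≤ a n)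
    (hsq : ∀ n, a (n + 1) ^ 2 ≤ a n * a (n + 2)) (n : ℕ) :
    a 1 * a n ≤ a 0 * a (n + 1) := by
  induction n with
  | zero => exact (mul_comm _ _).le
  | succ n ih =>
    obtain hzero | hpos := (ha (n + 1)).eq_or_lt
    · rw [← hzero, mul_zero]
      exact mul_nonneg (ha 0) (ha (n + 2))
    · refine le_of_mul_le_mul_right ?_ hpos
      calc a 1 * a (n + 1) * a (n + 1) = a 1 * a (n + 1) ^ 2 := by ring
        _ ≤ a 1 * (a n * a (n + 2)) := mul_le_mul_of_nonneg_left (hsq n) (ha 1)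
        _ = a 1 * a n * a (n + 2) := by ring
        _ ≤ a 0 * a (n + 1) * a (n + 2) := mul_le_mul_of_nonneg_right ih (ha (n + 2))
        _ = a 0 * a (n + 2) * a (n + 1) := by ring

lemma pow_succ_le_pow_mul_of_sq_le (ha : ∀ n, 0 ≤ a n)
    (hsq : ∀ n, a (n + 1) ^ 2 ≤ a n * a (n + 2)) (n : ℕ) :
    a 1 ^ (n + 1) ≤ a 0 ^ n * a (n + 1) := by
  induction n with
  | zero => simp
  | succ n ih =>
    calc a 1 ^ (n + 2) = a 1 ^ (n + 1) * a 1 := pow_succ _ _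
      _ ≤ a 0 ^ n * a (n + 1) * a 1 := mul_le_mul_of_nonneg_right ih (ha 1)
      _ = a 0 ^ n * (a 1 * a (n + 1)) := by ring
      _ ≤ a 0 ^ n * (a 0 * a (n + 2)) :=
        mul_le_mul_of_nonneg_left (mul_le_mul_succ_of_sq_le ha hsq (n + 1)) (pow_nonneg (ha 0) n)
      _ = a 0 ^ (n + 1) * a (n + 2) := by ring

end LogConvexSequence

section RealPowers

variable {a b c : ℝ}

lemma le_rpow_mul_rpow_of_pow_succ_le (ha : 0 ≤ a) (hc : 0 ≤ c) {n : ℕ}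
    (h : b ^ (n + 1) ≤ a ^ n * c) :
    b ≤ a ^ ((1 : ℝ) - 1 / (n + 1 : ℕ)) * c ^ ((1 : ℝ) / (n + 1 : ℕ)) := by
  refine le_of_pow_le_pow_left₀ n.succ_ne_zero (by positivity) (h.trans_eq ?_)
  have hexp : ((1 : ℝ) - 1 / (n + 1 : ℕ)) * (n + 1 : ℕ) = n := by
    field_simp
    push_cast
    ring
  rw [mul_pow, ← Real.rpow_mul_natCast ha, hexp, Real.rpow_natCast, one_div,
    Real.rpow_inv_natCast_pow hc n.succ_ne_zero]

lemma le_rpow_mul_rpow_half_of_sq_le (ha : 0 ≤ a) (hc : 0 ≤ c) {p q : ℝ}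
    (h : b ^ 2 ≤ (a ^ 2) ^ p * c ^ q) : b ≤ a ^ p * c ^ (q / 2) := by
  refine le_of_sq_le_sq (h.trans_eq ?_) (by positivity)
  rw [mul_pow, ← Real.rpow_mul_natCast hc, Nat.cast_ofNat, div_mul_cancel₀ q two_ne_zero,
    Real.rpow_pow_comm ha]

end RealPowers

section PositiveOperators

variable {𝕜 E : Type*} [RCLike 𝕜] [NormedAddCommGroup E] [InnerProductSpace 𝕜 E]

lemma isPositive_pow {A : E →ₗ[𝕜] E} (hA : A.IsPositive) : ∀ n : ℕ, (A ^ n).IsPositive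
  | 0 => LinearMap.isPositive_one
  | 1 => by rwa [pow_one]
  | n + 2 => by
    refine ⟨hA.isSymmetric.pow (n + 2), fun x ↦ ?_⟩
    have hconj : inner 𝕜 ((A ^ (n + 2)) x) x = inner 𝕜 ((A ^ n) (A x)) (A x) := by
      rw [pow_succ', pow_succ, Module.End.mul_apply, Module.End.mul_apply, hA.isSymmetric]
    rw [hconj]
    exact (isPositive_pow hA n).re_inner_nonneg_left (A x)

open scoped ComplexConjugate in
lemma norm_inner_apply_sq_le_of_isPositive {A : E →ₗ[𝕜] E} (hA : A.IsPositive) (x y : E) :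
    ‖inner 𝕜 (A x) y‖ ^ 2 ≤ RCLike.re (inner 𝕜 (A x) x) * RCLike.re (inner 𝕜 (A y) y) := by
  let form : PreInnerProductSpace.Core 𝕜 E :=
    { inner := fun u v ↦ inner 𝕜 (A u) v
      conj_inner_symm := fun u v ↦ by rw [inner_conj_symm, hA.isSymmetric]
      re_inner_nonneg := hA.re_inner_nonneg_left
      add_left := fun u v w ↦ by rw [map_add, inner_add_left]
      smul_left := fun u v r ↦ by rw [map_smul, inner_smul_left] }
  have hsymm : ‖inner 𝕜 (A y) x‖ = ‖inner 𝕜 (A x) y‖ := by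
    rw [hA.isSymmetric, norm_inner_symm]
  calc ‖inner 𝕜 (A x) y‖ ^ 2 = ‖inner 𝕜 (A x) y‖ * ‖inner 𝕜 (A y) x‖ := by rw [hsymm, sq]
    _ ≤ _ := InnerProductSpace.Core.inner_mul_inner_self_le (c := form) x y

end PositiveOperators

section Moments

variable {𝕜 F G H : Type*} [RCLike 𝕜]
  [NormedAddCommGroup F] [InnerProductSpace 𝕜 F] [CompleteSpace F]
  [NormedAddCommGroup G] [InnerProductSpace 𝕜 G] [CompleteSpace G]
  [NormedAddCommGroup H] [InnerProductSpace 𝕜 H] [CompleteSpace H]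
  {A : H →L[𝕜] H}

lemma re_inner_apply_le_norm_adjoint_conj (A : H →L[𝕜] H) (R : G →L[𝕜] H) (x : G) :
    RCLike.re (inner 𝕜 (A (R x)) (R x)) ≤ ‖adjoint R ∘L A ∘L R‖ * ‖x‖ ^ 2 := by
  calc RCLike.re (inner 𝕜 (A (R x)) (R x))
      = RCLike.re (inner 𝕜 ((adjoint R ∘L A ∘L R) x) x) := by
        rw [comp_apply, adjoint_inner_left, comp_apply]
    _ ≤ ‖(adjoint R ∘L A ∘L R) x‖ * ‖x‖ := re_inner_le_norm _ _
    _ ≤ ‖adjoint R ∘L A ∘L R‖ * ‖x‖ * ‖x‖ := by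
        gcongr
        exact le_opNorm _ x
    _ = ‖adjoint R ∘L A ∘L R‖ * ‖x‖ ^ 2 := by ring

lemma norm_adjoint_comp_comp_sq_le (hA : A.IsPositive) (R : F →L[𝕜] H) (S : G →L[𝕜] H) :
    ‖adjoint R ∘L A ∘L S‖ ^ 2 ≤ ‖adjoint R ∘L A ∘L R‖ * ‖adjoint S ∘L A ∘L S‖ := by
  rw [← Real.le_sqrt (norm_nonneg _) (by positivity)]
  refine opNorm_le_of_re_inner_le (𝕜 := 𝕜) (Real.sqrt_nonneg _) fun x y hx hy ↦ ?_
  have hR := re_inner_apply_le_norm_adjoint_conj A R y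
  have hS := re_inner_apply_le_norm_adjoint_conj A S x
  rw [hy, one_pow, mul_one] at hR
  rw [hx, one_pow, mul_one] at hS
  calc RCLike.re (inner 𝕜 ((adjoint R ∘L A ∘L S) x) y)
      = RCLike.re (inner 𝕜 (A (S x)) (R y)) := by rw [comp_apply, adjoint_inner_left, comp_apply]
    _ ≤ ‖inner 𝕜 (A (S x)) (R y)‖ := RCLike.re_le_norm _
    _ ≤ √(‖adjoint R ∘L A ∘L R‖ * ‖adjoint S ∘L A ∘L S‖) := by
      have hcs := norm_inner_apply_sq_le_of_isPositive hA.toLinearMap (S x) (R y)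
      refine Real.le_sqrt_of_sq_le (hcs.trans ?_)
      rw [mul_comm]
      exact mul_le_mul hR hS (hA.re_inner_nonneg_left _) (norm_nonneg _)

lemma norm_adjoint_conj_pow_succ_sq_le (hA : A.IsPositive) (R : G →L[𝕜] H) (n : ℕ) :
    ‖adjoint R ∘L (A ^ (n + 1)) ∘L R‖ ^ 2 ≤
      ‖adjoint R ∘L (A ^ n) ∘L R‖ * ‖adjoint R ∘L (A ^ (n + 2)) ∘L R‖ := by
  have hpow : (A ^ n).IsPositive := by
    rw [← isPositive_toLinearMap_iff, toLinearMap_pow]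
    exact isPositive_pow hA.toLinearMap n
  have hadj : adjoint (A ∘L R) = adjoint R ∘L A := by
    rw [adjoint_comp, hA.isSelfAdjoint.adjoint_eq]
  have hsucc : (A ^ n) ∘L (A ∘L R) = (A ^ (n + 1)) ∘L R := by
    rw [pow_succ, mul_def, comp_assoc]
  have hsucc' : adjoint (A ∘L R) ∘L (A ^ n) ∘L (A ∘L R) = adjoint R ∘L (A ^ (n + 2)) ∘L R := by
    rw [hadj, hsucc, pow_succ' A (n + 1), mul_def, comp_assoc, comp_assoc]
  have hcs := norm_adjoint_comp_comp_sq_le hpow R (A ∘L R)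
  rwa [hsucc', hsucc] at hcs

theorem norm_adjoint_conj_le_rpow_mul_rpow (hA : A.IsPositive) (R : G →L[𝕜] H) {N : ℕ}
    (hN : 1 ≤ N) :
    ‖adjoint R ∘L A ∘L R‖ ≤
      ‖adjoint R ∘L R‖ ^ ((1 : ℝ) - 1 / N) * ‖adjoint R ∘L (A ^ N) ∘L R‖ ^ ((1 : ℝ) / N) := by
  obtain ⟨n, rfl⟩ := Nat.exists_eq_add_of_le' hN
  have hmoments := pow_succ_le_pow_mul_of_sq_le
    (a := fun k ↦ ‖adjoint R ∘L (A ^ k) ∘L R‖) (fun _ ↦ norm_nonneg _)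
    (norm_adjoint_conj_pow_succ_sq_le hA R) n
  rw [pow_zero, pow_one, one_def, id_comp] at hmoments
  exact le_rpow_mul_rpow_of_pow_succ_le (norm_nonneg _) (norm_nonneg _) hmoments

end Moments

theorem statement18
    {𝕜 G H K : Type*} [RCLike 𝕜]
    [NormedAddCommGroup G] [InnerProductSpace 𝕜 G] [CompleteSpace G]
    [NormedAddCommGroup H] [InnerProductSpace 𝕜 H] [CompleteSpace H]
    [NormedAddCommGroup K] [InnerProductSpace 𝕜 K] [CompleteSpace K]
    (T : H →L[𝕜] K) (R : G →L[𝕜] H) (N : ℕ) (hN : 1 ≤ N) :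
    ‖(adjoint R) ∘L ((adjoint T ∘L T) ∘L R)‖ ≤
        ‖(adjoint R) ∘L R‖ ^ ((1 : ℝ) - 1 / N) *
          ‖(adjoint R) ∘L (((adjoint T ∘L T) ^ N) ∘L R)‖ ^ ((1 : ℝ) / N) ∧
      ‖T ∘L R‖ ≤
        ‖R‖ ^ ((1 : ℝ) - 1 / N) *
          ‖(adjoint R) ∘L (((adjoint T ∘L T) ^ N) ∘L R)‖ ^ ((1 : ℝ) / (2 * N)) := by
  have hconj := norm_adjoint_conj_le_rpow_mul_rpow (isPositive_adjoint_comp_self T) R hN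
  refine ⟨hconj, ?_⟩
  have hTR : ‖adjoint R ∘L (adjoint T ∘L T) ∘L R‖ = ‖T ∘L R‖ ^ 2 := by
    rw [sq, ← norm_adjoint_comp_self, adjoint_comp, comp_assoc, comp_assoc]
  rw [hTR, norm_adjoint_comp_self, ← sq] at hconj
  have hexp : (1 : ℝ) / (2 * N) = 1 / N / 2 := by rw [div_div, mul_comm]
  rw [hexp]
  exact le_rpow_mul_rpow_half_of_sq_le (norm_nonneg R) (norm_nonneg _) hconj
end
end
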